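/- arXiv:2407.10150 — 4 statements merged into one kernel-verified Lean document; each statement's English description precedes it below -/
import Mathlib

section
/- Let A be a standard operator algebra on a complex Banach space E. Fix integers m, k with k ≥ 2 and a sequence (i_1, …, i_m) with {i_1, …, i_m} = {1, …, k} such that some index i_p is different from i_q for all q ≠ p; define the generalized Jordan product T_1 ∘ ⋯ ∘ T_k = T_{i_1}⋯T_{i_m} + T_{i_m}⋯T_{i_1}. Let φ : A → A be a (not necessarily linear, additive or continuous) map whose range contains all bounded operators on E of rank at most three. Suppose for any a_1, …, a_k ∈ A, in which at least one a_j has rank at most one, there is a linear Jordan automorphism θ of A with φ(a_1) ∘ ⋯ ∘ φ(a_k) = θ(a_1 ∘ ⋯ ∘ a_k). Then there is a complex scalar ξ with ξ^m = 1 such that either there is an invertible operator S ∈ B(E) with φ(a) = ξ S a S⁻¹ for all a ∈ A, or there is an invertible bounded linear operator S from the continuous dual E′ onto E with φ(a) = ξ S a′ S⁻¹ for all a ∈ A, where a′ : E′ → E′ denotes the dual (adjoint) map of a. -/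
set_option synthInstance.maxHeartbeats 1000000
set_option maxHeartbeats 1000000

open Cardinal ContinuousLinearMap

/-- A linear Jordan automorphism of a complex algebra: a bijective complex-linear map `J`
with `J (ab + ba) = J a * J b + J b * J a` for all `a, b`. -/
def IsJordanAutomorphism {A : Type*} [Ring A] [Algebra ℂ A] (θ : A → A) : Prop :=
  Function.Bijective θ ∧ IsLinearMap ℂ θ ∧
    ∀ a b : A, θ (a * b + b * a) = θ a * θ b + θ b * θ a

/-- The dual (adjoint) map `a' : E' → E'`, `f ↦ f ∘ a`, of a bounded operator `a` on `E`. -/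
noncomputable def dualOp {E : Type*} [NormedAddCommGroup E] [NormedSpace ℂ E]
    (a : E →L[ℂ] E) : (E →L[ℂ] ℂ) →L[ℂ] (E →L[ℂ] ℂ) :=
  (ContinuousLinearMap.compL ℂ E E ℂ).flip a

section aux

/-- Trace is well defined on finite sums of rank one operators. -/
lemma trace_aux {E : Type*} [AddCommGroup E] [Module ℂ E] {ι : Type*} [Fintype ι]
    (x : ι → E) (f : ι → E →ₗ[ℂ] ℂ) (h : ∀ z, ∑ j, f j z • x j = 0) :
    ∑ j, f j (x j) = 0 := by
  classical
  let V := Submodule.span ℂ (Set.range x)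
  have hx : ∀ j, x j ∈ V := fun j => Submodule.subset_span ⟨j, rfl⟩
  haveI : FiniteDimensional ℂ V := FiniteDimensional.span_of_finite ℂ (Set.finite_range x)
  let t : TensorProduct ℂ (Module.Dual ℂ V) V :=
    ∑ j, ((f j).comp V.subtype : Module.Dual ℂ V) ⊗ₜ[ℂ] (⟨x j, hx j⟩ : V)
  have h0 : dualTensorHom ℂ V V t = 0 := by
    ext z
    simp only [t, map_sum, LinearMap.sum_apply, dualTensorHom_apply]
    have := h z
    simpa using this
  have h1 := LinearMap.trace_eq_contract_apply (R := ℂ) (M := V) t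
  rw [h0] at h1
  simp only [t, map_sum, contractLeft_apply, map_zero] at h1
  simpa using h1.symm

lemma theta_sq {A : Type*} [Ring A] [Algebra ℂ A] {θ : A → A} (h : IsJordanAutomorphism θ)
    (a : A) : θ (a * a) = θ a * θ a := by
  obtain ⟨hb, hl, hj⟩ := h
  have h1 := hj a a
  rw [hl.map_add] at h1
  have h2 : (2 : ℂ) • θ (a * a) = (2 : ℂ) • (θ a * θ a) := by
    rw [two_smul, two_smul]; exact h1
  exact smul_right_injective A (two_ne_zero' ℂ) h2

lemma theta_triple {A : Type*} [Ring A] [Algebra ℂ A] {θ : A → A} (h : IsJordanAutomorphism θ)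
    (a b : A) : θ (a * b * a) = θ a * θ b * θ a := by
  have hsq := theta_sq h a
  obtain ⟨hb, hl, hj⟩ := h
  have h1 := hj a (a * b + b * a)
  have h2 := hj (a * a) b
  rw [hj a b] at h1
  rw [hsq] at h2
  have h3 : a * (a * b + b * a) + (a * b + b * a) * a
      = (2 : ℂ) • (a * b * a) + (a * a * b + b * (a * a)) := by
    rw [two_smul]; noncomm_ring
  rw [h3, hl.map_add, hl.map_smul, h2] at h1
  have h4 : (2 : ℂ) • θ (a * b * a) = (2 : ℂ) • (θ a * θ b * θ a) := by
    have : (2 : ℂ) • θ (a * b * a) = (θ a * (θ a * θ b + θ b * θ a) +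
      (θ a * θ b + θ b * θ a) * θ a) - (θ a * θ a * θ b + θ b * (θ a * θ a)) :=
      eq_sub_of_add_eq h1
    rw [this, two_smul]; noncomm_ring
  exact smul_right_injective A (two_ne_zero' ℂ) h4

variable {E : Type*} [NormedAddCommGroup E] [NormedSpace ℂ E]

lemma theta_rankone (A : Subalgebra ℂ (E →L[ℂ] E))
    (hA : ∀ (f : E →L[ℂ] ℂ) (x : E), f.smulRight x ∈ A) {θ : A → A}
    (h : IsJordanAutomorphism θ) (a : A) (f : E →L[ℂ] ℂ) (x : E)
    (ha : (a : E →L[ℂ] E) = f.smulRight x) :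
    ∃ (k : E →L[ℂ] ℂ) (y : E), (θ a : E →L[ℂ] E) = k.smulRight y ∧ k y = f x := by
  by_cases h0 : θ a = 0
  · have hz : θ 0 = 0 := by
      have := h.2.1.map_smul (0 : ℂ) 0
      simpa using this
    have ha0 : a = 0 := h.1.1 (h0.trans hz.symm)
    refine ⟨0, 0, ?_, ?_⟩
    · rw [h0]; ext; simp
    · have : f.smulRight x = 0 := by rw [← ha, ha0]; rfl
      have h2 := congrArg (fun T => f (T x)) this
      simp at h2
      simp [h2]
  · set c : E →L[ℂ] E := (θ a : E →L[ℂ] E) with hc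
    have hc0 : c ≠ 0 := fun h' => h0 (Subtype.ext h')
    obtain ⟨z, hz⟩ : ∃ z, c z ≠ 0 := by
      by_contra hcon
      push Not at hcon
      exact hc0 (ContinuousLinearMap.ext hcon)
    obtain ⟨g, hg⟩ := SeparatingDual.exists_eq_one (R := ℂ) hz
    obtain ⟨b, hb⟩ := h.1.2 ⟨g.smulRight z, hA g z⟩
    have h1 := theta_triple h a b
    have h2 : a * b * a = (f ((b : E →L[ℂ] E) x)) • a := by
      apply Subtype.ext
      simp only [Subalgebra.coe_mul, Subalgebra.coe_smul, ha]
      ext w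
      simp [smul_smul, mul_comm]
    rw [h2, h.2.1.map_smul, hb] at h1
    have h3 : ∀ w, f ((b : E →L[ℂ] E) x) • c w = g (c w) • c z := by
      intro w
      have := congrArg (fun T : A => (T : E →L[ℂ] E) w) h1
      simpa [← hc] using this
    have hlam : f ((b : E →L[ℂ] E) x) = 1 := by
      have := congrArg g (h3 z)
      simpa [hg] using this
    have h4 : c = (g.comp c).smulRight (c z) := by
      ext w
      have := h3 w
      rw [hlam, one_smul] at this
      simpa using this
    refine ⟨g.comp c, c z, h4, ?_⟩
    have h5 : a * a = f x • a := by
      apply Subtype.ext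
      simp only [Subalgebra.coe_mul, Subalgebra.coe_smul, ha]
      ext w
      simp [smul_smul, mul_comm]
    have h6 := theta_sq h a
    rw [h5, h.2.1.map_smul] at h6
    have h7 := congrArg (fun T : A => g ((T : E →L[ℂ] E) z)) h6
    simp [← hc, hg] at h7
    simp [h7]

lemma list_prod_aux {M : Type*} [Monoid M] {m k : ℕ} (i : Fin m → Fin k) (p : Fin m)
    (hp : ∀ q : Fin m, q ≠ p → i q ≠ i p) (X Y : M) :
    (List.ofFn fun j => if i j = i p then X else Y) =
      List.replicate (p : ℕ) Y ++ X :: List.replicate (m - 1 - p) Y := by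
  have hpm := p.2
  apply List.ext_getElem
  · simp; omega
  · intro n h1 h2
    simp only [List.getElem_ofFn]
    have hn : n < m := by simpa using h1
    rcases lt_trichotomy n p with h | h | h
    · have : (⟨n, hn⟩ : Fin m) ≠ p := by intro e; rw [← e] at h; simp at h
      rw [if_neg (hp _ this), List.getElem_append_left (by simpa using h)]
      simp
    · subst h
      simp
    · have : (⟨n, hn⟩ : Fin m) ≠ p := by intro e; rw [← e] at h; simp at h
      rw [if_neg (hp _ this), List.getElem_append_right (by simpa using h.le)]
      simp only [List.length_replicate]
      rw [List.getElem_cons, dif_neg (by omega)]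
      simp

lemma list_prod_aux1 {M : Type*} [Monoid M] {m k : ℕ} (i : Fin m → Fin k) (p : Fin m)
    (hp : ∀ q : Fin m, q ≠ p → i q ≠ i p) (X Y : M) :
    (List.ofFn fun j => if i j = i p then X else Y).prod = Y ^ (p : ℕ) * X * Y ^ (m - 1 - p) := by
  rw [list_prod_aux i p hp]; simp [mul_assoc]

lemma list_prod_aux2 {M : Type*} [Monoid M] {m k : ℕ} (i : Fin m → Fin k) (p : Fin m)
    (hp : ∀ q : Fin m, q ≠ p → i q ≠ i p) (X Y : M) :
    (List.ofFn fun j => if i j = i p then X else Y).reverse.prod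
      = Y ^ (m - 1 - p) * X * Y ^ (p : ℕ) := by
  rw [list_prod_aux i p hp]; simp [mul_assoc]

lemma step1 (B : E →L[ℂ] E) (m : ℕ) (h : E →L[ℂ] ℂ) (e : E) (he : h e = 1)
    (hB : B ^ m = h.smulRight e) :
    ∃ ξ : ℂ, ξ ^ m = 1 ∧ (∀ j : ℕ, (B ^ j) e = ξ ^ j • e) ∧
      (∀ (j : ℕ) z, h ((B ^ j) z) = ξ ^ j * h z) := by
  have hc : ∀ z, h z • B e = h (B z) • e := by
    intro z
    have h1 : B * B ^ m = B ^ m * B := (pow_succ' B m).symm.trans (pow_succ B m)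
    rw [hB] at h1
    have := congrArg (fun T : E →L[ℂ] E => T z) h1
    simpa using this
  have hBe : B e = h (B e) • e := by
    have := hc e
    rwa [he, one_smul] at this
  have hhB : ∀ z, h (B z) = h (B e) * h z := by
    intro z
    have := congrArg h (hc z)
    simp only [map_smul, smul_eq_mul, he, mul_one] at this
    rw [← this, mul_comm]
  have hpe : ∀ j : ℕ, (B ^ j) e = h (B e) ^ j • e := by
    intro j
    induction j with
    | zero => simp
    | succ j ih =>
      rw [pow_succ', mul_apply_eq_comp, ih, map_smul, hBe, smul_smul, ← hBe, pow_succ]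
  have hph : ∀ (j : ℕ) z, h ((B ^ j) z) = h (B e) ^ j * h z := by
    intro j z
    induction j with
    | zero => simp
    | succ j ih =>
      rw [pow_succ', mul_apply_eq_comp, hhB, ih, pow_succ]; ring
  refine ⟨h (B e), ?_, hpe, hph⟩
  have := hph m e
  rw [hB] at this
  simpa [he] using this.symm

lemma step2 (B : E →L[ℂ] E) (n : ℕ) (hn : 1 ≤ n) (h : E →L[ℂ] ℂ) (e : E) (he : h e = 1) (ξ : ℂ)
    (hξ : ξ ≠ 0) (hB : B ^ (n + 1) = h.smulRight e)
    (hpe : ∀ j : ℕ, (B ^ j) e = ξ ^ j • e)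
    (hph : ∀ (j : ℕ) z, h ((B ^ j) z) = ξ ^ j * h z)
    (hW : ∀ (f : E →L[ℂ] ℂ) x (g : E →L[ℂ] ℂ) y, ∃ (k₁ : E →L[ℂ] ℂ) (y₁ : E) (k₂ : E →L[ℂ] ℂ) (y₂ : E),
      B ^ n * (f.smulRight x + g.smulRight y) + (f.smulRight x + g.smulRight y) * B ^ n
        = k₁.smulRight y₁ + k₂.smulRight y₂) (v : E) (hv : h v = 0) : (B ^ n) v = 0 := by
  by_contra hne
  obtain ⟨g₀, hg₀⟩ := SeparatingDual.exists_eq_one (R := ℂ) hne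
  set w := (B ^ n) v with hw
  have hhw : h w = 0 := by rw [hw, hph, hv, mul_zero]
  let g : E →L[ℂ] ℂ := g₀ - g₀ e • h
  have hge : g e = 0 := by simp [g, he]
  have hgw : g w = 1 := by simp [g, hhw, hg₀]
  have hBw : (B ^ n) w = 0 := by
    rw [hw, ← mul_apply_eq_comp, ← pow_add]
    have : n + n = (n - 1) + (n + 1) := by omega
    rw [this, pow_add, hB]
    simp [hv]
  obtain ⟨k₁, y₁, k₂, y₂, hk⟩ := hW h e g v
  have hk' : ∀ z, h z • (B ^ n) e + g z • w + (h ((B ^ n) z) • e + g ((B ^ n) z) • v)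
      = k₁ z • y₁ + k₂ z • y₂ := by
    intro z
    have := congrArg (fun T : E →L[ℂ] E => T z) hk
    simpa only [ContinuousLinearMap.add_apply, mul_apply_eq_comp, ContinuousLinearMap.smulRight_apply, map_add, map_smul, ← hw] using this
  have he1 := hk' e
  have he2 := hk' w
  have he3 := hk' v
  simp only [he, hge, hpe, map_smul, hgw, hhw, hBw, hv, ← hw, map_zero, smul_zero, zero_smul,
    add_zero, zero_add, one_smul, smul_eq_mul, mul_one, mul_zero] at he1 he2 he3
  let V := Submodule.span ℂ ({y₁, y₂} : Set E)
  have hV : ∀ a b : ℂ, a • y₁ + b • y₂ ∈ V := fun a b =>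
    Submodule.add_mem _ (Submodule.smul_mem _ _ (Submodule.subset_span (by simp)))
      (Submodule.smul_mem _ _ (Submodule.subset_span (by simp)))
  have hwV : w ∈ V := he2 ▸ hV _ _
  have heV : e ∈ V := by
    have h1 : ξ ^ n • e + ξ ^ n • e ∈ V := he1 ▸ hV _ _
    have h2 : (2 * ξ ^ n) • e ∈ V := by rw [two_mul, add_smul]; exact h1
    have h3 := V.smul_mem (2 * ξ ^ n)⁻¹ h2
    rwa [smul_smul, inv_mul_cancel₀ (mul_ne_zero two_ne_zero (pow_ne_zero _ hξ)), one_smul] at h3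
  have hvV : v ∈ V := by
    have h1 : g v • w + v ∈ V := he3 ▸ hV _ _
    exact (Submodule.add_mem_iff_right _ (V.smul_mem _ hwV)).1 h1
  have hli : LinearIndependent ℂ ![(⟨e, heV⟩ : V), ⟨w, hwV⟩, ⟨v, hvV⟩] := by
    rw [Fintype.linearIndependent_iff]
    intro c hc
    rw [Fin.sum_univ_three] at hc
    have hc' : c 0 • e + c 1 • w + c 2 • v = 0 := by
      simpa using congrArg (Subtype.val) hc
    have c0 : c 0 = 0 := by
      have := congrArg h hc'
      simpa [he, hhw, hv] using this
    have c2 : c 2 = 0 := by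
      have := congrArg (B ^ n) hc'
      rw [c0, zero_smul, zero_add, map_add, map_smul, map_smul, hBw, ← hw, smul_zero, zero_add,
        map_zero] at this
      exact (smul_eq_zero.1 this).resolve_right hne
    have c1 : c 1 = 0 := by
      rw [c0, c2, zero_smul, zero_smul, zero_add, add_zero] at hc'
      exact (smul_eq_zero.1 hc').resolve_right hne
    intro j
    fin_cases j
    · exact c0
    · exact c1
    · exact c2
  have : FiniteDimensional ℂ V := FiniteDimensional.span_of_finite ℂ (by simp)
  have h1 := hli.fintype_card_le_finrank
  have h2 : Module.finrank ℂ V ≤ 2 := by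
    classical
    have := finrank_span_finset_le_card (R := ℂ) ({y₁, y₂} : Finset E)
    have h3 : ({y₁, y₂} : Finset E).card ≤ 2 := Finset.card_le_two
    simp only [Finset.coe_insert, Finset.coe_singleton] at this
    exact (this.trans h3)
  simp at h1
  omega

lemma step3 (B : E →L[ℂ] E) (r s : ℕ) (hs : 1 ≤ s) (hsr : s ≤ r)
    (h : E →L[ℂ] ℂ) (e : E) (he : h e = 1) (ξ : ℂ)
    (hξ : ξ ≠ 0) (hB : B ^ (r + s + 1) = h.smulRight e)
    (hpe : ∀ j : ℕ, (B ^ j) e = ξ ^ j • e)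
    (hph : ∀ (j : ℕ) z, h ((B ^ j) z) = ξ ^ j * h z)
    (hW : ∀ (f : E →L[ℂ] ℂ) x (g : E →L[ℂ] ℂ) y, ∃ (k : E →L[ℂ] ℂ) (t : E),
      B ^ r * (f.smulRight x + g.smulRight y) * B ^ s
        + B ^ s * (f.smulRight x + g.smulRight y) * B ^ r
        = k.smulRight t) (v : E) (hv : h v = 0) : (B ^ (r + s)) v = 0 := by
  by_contra hne
  obtain ⟨g₀, hg₀⟩ := SeparatingDual.exists_eq_one (R := ℂ) hne
  set w := (B ^ (r + s)) v with hw
  have hhw : h w = 0 := by rw [hw, hph, hv, mul_zero]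
  let g : E →L[ℂ] ℂ := g₀ - g₀ e • h
  have hge : g e = 0 := by simp [g, he]
  have hgw : g w = 1 := by simp [g, hhw, hg₀]
  obtain ⟨k, t, hk⟩ := hW h e g v
  have hk' : ∀ z, h ((B ^ s) z) • (B ^ r) e + g ((B ^ s) z) • (B ^ r) v
      + (h ((B ^ r) z) • (B ^ s) e + g ((B ^ r) z) • (B ^ s) v) = k z • t := by
    intro z
    have := congrArg (fun T : E →L[ℂ] E => T z) hk
    simpa only [ContinuousLinearMap.add_apply, mul_apply_eq_comp, ContinuousLinearMap.smulRight_apply, map_add, map_smul, smul_add] using this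
  have hsr' : (B ^ s) ((B ^ r) v) = w := by
    rw [hw, ← mul_apply_eq_comp, ← pow_add, add_comm]
  have he1 := hk' e
  have he2 := hk' ((B ^ r) v)
  simp only [he, hge, hpe, hph, map_smul, hsr', hgw, hhw, hv, map_zero, smul_zero, zero_smul,
    add_zero, zero_add, one_smul, smul_eq_mul, mul_one, mul_zero, zero_mul, smul_smul] at he1 he2
  obtain ⟨c, hc, hct⟩ : ∃ c : ℂ, c ≠ 0 ∧ c • (B ^ r) v = k ((B ^ r) v) • t := by
    rcases hsr.eq_or_lt with h1 | h1
    · subst h1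
      rw [hsr', hgw, one_smul, ← two_smul ℂ] at he2
      exact ⟨2, two_ne_zero, he2⟩
    · have : (B ^ r) ((B ^ r) v) = 0 := by
        rw [← mul_apply_eq_comp, ← pow_add]
        have : r + r = (r - s - 1) + (r + s + 1) := by omega
        rw [this, pow_add, hB]
        simp [hv]
      rw [this] at he2
      simp only [map_zero, zero_smul, add_zero] at he2
      exact ⟨1, one_ne_zero, by rw [one_smul]; exact he2⟩
  have hBr : (B ^ r) v ≠ 0 := by
    intro h0
    rw [h0, map_zero] at hsr'
    exact hne hsr'.symm
  have h1 := congrArg h hct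
  simp only [map_smul, hph, hv, mul_zero, smul_eq_mul] at h1
  have h2 := congrArg h he1
  simp only [map_add, map_smul, smul_eq_mul, he, mul_one] at h2
  have hht : h t ≠ 0 := by
    intro h0
    rw [h0, mul_zero, mul_comm, ← two_mul] at h2
    have : (2 : ℂ) * (ξ ^ r * ξ ^ s) ≠ 0 :=
      mul_ne_zero two_ne_zero (mul_ne_zero (pow_ne_zero _ hξ) (pow_ne_zero _ hξ))
    exact this h2
  have h3 : k ((B ^ r) v) = 0 := by
    rcases mul_eq_zero.1 h1.symm with h4 | h4
    · exact h4
    · exact absurd h4 hht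
  rw [h3, zero_smul] at hct
  rcases smul_eq_zero.1 hct with h4 | h4
  · exact hc h4
  · exact hBr h4

lemma step5 (B T : E →L[ℂ] E) (r s : ℕ) (hsr : s ≤ r)
    (h : E →L[ℂ] ℂ) (e : E) (he : h e = 1) (ξ : ℂ)
    (hn : ∀ z, (B ^ (r + s)) z = (ξ ^ (r + s) * h z) • e)
    (hpe : ∀ j : ℕ, (B ^ j) e = ξ ^ j • e)
    (hph : ∀ (j : ℕ) z, h ((B ^ j) z) = ξ ^ j * h z)
    (l : ℂ) (k : E →L[ℂ] ℂ) (y : E) (hky : k y = 1)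
    (hW : B ^ r * T * B ^ s + B ^ s * T * B ^ r = l • k.smulRight y) :
    2 * ξ ^ (r + s) * h (T e) = l := by
  have hk : ∀ z, (B ^ r) (T ((B ^ s) z)) + (B ^ s) (T ((B ^ r) z)) = (l * k z) • y := by
    intro z
    have := congrArg (fun T : E →L[ℂ] E => T z) hW
    simpa [smul_smul] using this
  have E4 := congrArg h (hk e)
  simp only [map_add, map_smul, smul_eq_mul, hpe, hph] at E4
  by_cases hl : l = 0
  · rw [hl] at E4 ⊢
    rw [pow_add]; linear_combination E4
  have h2r : ∀ z, (B ^ r) ((B ^ r) z) = (ξ ^ (r + r) * h z) • e := by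
    intro z
    rw [← mul_apply_eq_comp, ← pow_add]
    have : r + r = (r - s) + (r + s) := by omega
    rw [this, pow_add, mul_apply_eq_comp, hn, map_smul, hpe, smul_smul]
    congr 1
    rw [pow_add ξ (r - s)]; ring
  have hrs : ∀ z, (B ^ r) ((B ^ s) z) = (ξ ^ (r + s) * h z) • e := by
    intro z
    rw [← hn, ← mul_apply_eq_comp, ← pow_add]
  have hsr' : ∀ z, (B ^ s) ((B ^ r) z) = (ξ ^ (r + s) * h z) • e := by
    intro z
    rw [← hn, ← mul_apply_eq_comp, ← pow_add, add_comm]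
  have hBy : (B ^ r) y = (ξ ^ r * h y) • e := by
    have h1 := congrArg (B ^ r) (hk y)
    rw [map_add, h2r, hrs, hky, mul_one, map_smul, ← add_smul] at h1
    have h2 := congrArg h h1
    simp only [map_smul, smul_eq_mul, he, mul_one, hph] at h2
    rw [h2, ← smul_smul] at h1
    exact (smul_right_injective E hl h1).symm
  have hkB : ∀ z, k ((B ^ r) z) = ξ ^ r * k e * h z := by
    intro z
    have h1 : ∀ z, _ := fun z => congrArg k (hk ((B ^ r) z))
    simp only [hsr', h2r, map_add, map_smul, smul_eq_mul, hky, mul_one] at h1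
    have h2 := h1 z
    have h3 := h1 e
    rw [hpe, map_smul, smul_eq_mul, he] at h3
    have : l * k ((B ^ r) z) = l * (ξ ^ r * k e * h z) := by
      rw [← h2]; linear_combination h z * h3
    exact mul_left_cancel₀ hl this
  have E1 := congrArg h (hk y)
  have E2 := congrArg k (hk e)
  have E3 := congrArg k (hk y)
  simp only [map_add, map_smul, smul_eq_mul, hpe, hph, hBy, hkB, hky, mul_one] at E1 E2 E3
  have h6 : l * (h y * k e - 1) ^ 2 = 0 := by
    linear_combination k e * E1 + (h y) * E2 - E3 - (h y * k e) * E4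
  have h7 : h y * k e = 1 := by
    rcases mul_eq_zero.1 h6 with h8 | h8
    · exact absurd h8 hl
    · exact sub_eq_zero.1 (pow_eq_zero_iff two_ne_zero |>.1 h8)
  rw [pow_add]
  linear_combination E4 + l * h7
lemma key_idem (A : Subalgebra ℂ (E →L[ℂ] E))
    (hA : ∀ (f : E →L[ℂ] ℂ) (x : E), f.smulRight x ∈ A) (φ : A → A) (r s : ℕ) (hsr : s ≤ r)
    (hr : 1 ≤ r)
    (hR : ∀ (f : E →L[ℂ] ℂ) x (g : E →L[ℂ] ℂ) y, ∃ a : A,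
      (φ a : E →L[ℂ] E) = f.smulRight x + g.smulRight y)
    (H : ∀ a b : A, (∃ (f : E →L[ℂ] ℂ) (x : E), (b : E →L[ℂ] E) = f.smulRight x) →
      ∃ θ : A → A, IsJordanAutomorphism θ ∧
        φ b ^ r * φ a * φ b ^ s + φ b ^ s * φ a * φ b ^ r =
          θ (b ^ r * a * b ^ s + b ^ s * a * b ^ r))
    (f : E →L[ℂ] ℂ) (x : E) (hfx : f x = 1) :
    ∃ (k : E →L[ℂ] ℂ) (u : E), (∀ a : A, k ((φ a : E →L[ℂ] E) u) = f ((a : E →L[ℂ] E) x)) ∧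
      (k u) ^ (r + s + 1) = 1 := by
  let b : A := ⟨f.smulRight x, hA f x⟩
  have hb : (b : E →L[ℂ] E) = f.smulRight x := rfl
  have hbb : IsIdempotentElem b := by
    apply Subtype.ext
    rw [Subalgebra.coe_mul, hb]
    ext z
    simp [hfx]
  have hbp : ∀ j : ℕ, 1 ≤ j → b ^ j = b := by
    intro j hj
    obtain ⟨i, rfl⟩ := Nat.exists_eq_add_of_le hj
    rw [add_comm]; exact hbb.pow_succ_eq i
  have H' : ∀ a : A, ∃ θ : A → A, IsJordanAutomorphism θ ∧
        φ b ^ r * φ a * φ b ^ s + φ b ^ s * φ a * φ b ^ r =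
          θ (b ^ r * a * b ^ s + b ^ s * a * b ^ r) := fun a => H a b ⟨f, x, hb⟩
  set B : E →L[ℂ] E := (φ b : E →L[ℂ] E) with hBdef
  -- the power of B
  obtain ⟨h, e, he, hB⟩ : ∃ (h : E →L[ℂ] ℂ) (e : E), h e = 1 ∧ B ^ (r + s + 1) = h.smulRight e := by
    obtain ⟨θ, hθ, h1⟩ := H' b
    obtain ⟨h, e, h2, h3⟩ := theta_rankone A hA hθ b f x hb
    refine ⟨h, e, h3.trans hfx, ?_⟩
    have e1 : φ b ^ r * φ b * φ b ^ s + φ b ^ s * φ b * φ b ^ r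
        = (2 : ℂ) • φ b ^ (r + s + 1) := by
      rw [two_smul, ← pow_succ, ← pow_succ, ← pow_add, ← pow_add]
      congr 2 <;> omega
    have e2 : b ^ r * b * b ^ s + b ^ s * b * b ^ r = (2 : ℂ) • b := by
      rw [two_smul, ← pow_succ, ← pow_succ, ← pow_add, ← pow_add, hbp _ (by omega),
        hbp _ (by omega)]
    rw [e1, e2, hθ.2.1.map_smul] at h1
    have h4 := smul_right_injective A (two_ne_zero' ℂ) h1
    have h5 := congrArg Subtype.val h4
    simp only [Subalgebra.coe_pow] at h5
    rw [← h2, ← h5]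
  obtain ⟨ξ, hξm, hpe, hph⟩ := step1 B _ h e he hB
  have hξ : ξ ≠ 0 := by
    rintro rfl
    rw [zero_pow (by omega)] at hξm
    exact zero_ne_one hξm
  have hn_of : (∀ v, h v = 0 → (B ^ (r + s)) v = 0) →
      ∀ z, (B ^ (r + s)) z = (ξ ^ (r + s) * h z) • e := by
    intro hv z
    have h1 := hv (z - h z • e) (by simp [he])
    rw [map_sub, map_smul, hpe, sub_eq_zero, smul_smul, mul_comm] at h1
    exact h1
  suffices hmain : ∀ a : A, 2 * ξ ^ (r + s) * h ((φ a : E →L[ℂ] E) e)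
      = 2 * f ((a : E →L[ℂ] E) x) by
    refine ⟨ξ ^ (r + s) • h, e, ?_, ?_⟩
    · intro a
      have := hmain a
      rw [mul_assoc] at this
      simpa using mul_left_cancel₀ (two_ne_zero' ℂ) this
    · simp only [FunLike.coe_smul, Pi.smul_apply, he, smul_eq_mul, mul_one]
      rw [← pow_mul, mul_comm, pow_mul, hξm, one_pow]
  rcases Nat.eq_zero_or_pos s with hs | hs
  · subst hs
    have hX : ∀ a : A, ∃ (k₁ : E →L[ℂ] ℂ) (y₁ : E) (k₂ : E →L[ℂ] ℂ) (y₂ : E),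
        B ^ r * (φ a : E →L[ℂ] E) + (φ a : E →L[ℂ] E) * B ^ r
          = k₁.smulRight y₁ + k₂.smulRight y₂ ∧ k₁ y₁ = f ((a : E →L[ℂ] E) x) ∧
          k₂ y₂ = f ((a : E →L[ℂ] E) x) := by
      intro a
      obtain ⟨θ, hθ, h1⟩ := H' a
      simp only [pow_zero, mul_one, one_mul] at h1
      rw [hbp r hr, hθ.2.1.map_add] at h1
      obtain ⟨k₁, y₁, h2, h3⟩ := theta_rankone A hA hθ (b * a) (f.comp (a : E →L[ℂ] E)) x (by
        rw [Subalgebra.coe_mul, hb]; ext z; simp)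
      obtain ⟨k₂, y₂, h4, h5⟩ := theta_rankone A hA hθ (a * b) f ((a : E →L[ℂ] E) x) (by
        rw [Subalgebra.coe_mul, hb]; ext z; simp)
      refine ⟨k₁, y₁, k₂, y₂, ?_, h3, h5⟩
      have := congrArg Subtype.val h1
      simp only [Subalgebra.coe_add, Subalgebra.coe_mul, Subalgebra.coe_pow] at this
      rw [← h2, ← h4]
      exact this
    have hn := hn_of (by
      intro v hv
      refine step2 B r hr h e he ξ hξ hB hpe hph ?_ v hv
      intro f' x' g' y'
      obtain ⟨a, ha⟩ := hR f' x' g' y'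
      obtain ⟨k₁, y₁, k₂, y₂, h1, -, -⟩ := hX a
      rw [← ha]
      exact ⟨k₁, y₁, k₂, y₂, h1⟩)
    intro a
    obtain ⟨k₁, y₁, k₂, y₂, h1, h2, h3⟩ := hX a
    have h4 : ∀ z, (ξ ^ (r + 0) * h ((φ a : E →L[ℂ] E) z)) • e
        + (ξ ^ (r + 0) * h z) • (φ a : E →L[ℂ] E) e = k₁ z • y₁ + k₂ z • y₂ := by
      intro z
      have := congrArg (fun T : E →L[ℂ] E => T z) h1
      simp only [add_apply, mul_apply_eq_comp, ContinuousLinearMap.smulRight_apply] at this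
      have hn' : ∀ z, (B ^ r) z = _ := hn
      rwa [hn', hn', map_smul] at this
    have h5 := trace_aux ![e, (φ a : E →L[ℂ] E) e, y₁, y₂]
      ![ξ ^ (r + 0) • ((h : E →ₗ[ℂ] ℂ).comp ((φ a : E →L[ℂ] E) : E →ₗ[ℂ] E)),
        ξ ^ (r + 0) • (h : E →ₗ[ℂ] ℂ), -(k₁ : E →ₗ[ℂ] ℂ), -(k₂ : E →ₗ[ℂ] ℂ)] (by
        intro z
        have := h4 z
        rw [← sub_eq_zero] at this
        simp [Fin.sum_univ_four]
        rw [← this]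
        simp only [smul_smul, add_zero]
        abel)
    simp [Fin.sum_univ_four] at h5
    rw [h2, h3] at h5
    rw [add_zero]
    linear_combination h5
  · have hX : ∀ a : A, ∃ (k : E →L[ℂ] ℂ) (y : E), k y = 1 ∧
        B ^ r * (φ a : E →L[ℂ] E) * B ^ s + B ^ s * (φ a : E →L[ℂ] E) * B ^ r
          = (2 * f ((a : E →L[ℂ] E) x)) • k.smulRight y := by
      intro a
      obtain ⟨θ, hθ, h1⟩ := H' a
      have e1 : b * a * b = f ((a : E →L[ℂ] E) x) • b := by
        apply Subtype.ext
        simp only [Subalgebra.coe_mul, Subalgebra.coe_smul, hb]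
        ext w
        simp [smul_smul, mul_comm]
      rw [hbp r hr, hbp s hs, e1, ← add_smul, ← two_mul, hθ.2.1.map_smul] at h1
      obtain ⟨k, y, h2, h3⟩ := theta_rankone A hA hθ b f x hb
      refine ⟨k, y, h3.trans hfx, ?_⟩
      have := congrArg Subtype.val h1
      simp only [Subalgebra.coe_add, Subalgebra.coe_mul, Subalgebra.coe_pow,
        Subalgebra.coe_smul] at this
      rw [← h2]
      exact this
    have hn := hn_of (by
      intro v hv
      refine step3 B r s hs hsr h e he ξ hξ hB hpe hph ?_ v hv
      intro f' x' g' y'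
      obtain ⟨a, ha⟩ := hR f' x' g' y'
      obtain ⟨k, y, -, h1⟩ := hX a
      rw [← ha, h1]
      refine ⟨k, (2 * f ((a : E →L[ℂ] E) x)) • y, ?_⟩
      ext z
      simp [smul_smul, mul_comm, mul_left_comm])
    intro a
    obtain ⟨k, y, h1, h2⟩ := hX a
    exact step5 B _ r s hsr h e he ξ hn hpe hph _ k y h1 h2

lemma trace_sub (T : E →L[ℂ] E) (k k₁ k₂ : E →L[ℂ] ℂ) (u u₁ u₂ : E)
    (h : k.smulRight u = k₁.smulRight u₁ - k₂.smulRight u₂) :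
    k (T u) = k₁ (T u₁) - k₂ (T u₂) := by
  have h5 := trace_aux ![T u, T u₁, T u₂]
      ![(k : E →ₗ[ℂ] ℂ), -(k₁ : E →ₗ[ℂ] ℂ), (k₂ : E →ₗ[ℂ] ℂ)] (by
        intro z
        have h1 := congrArg (fun S : E →L[ℂ] E => T (S z)) h
        simp at h1
        simp [Fin.sum_univ_three, h1]
        abel)
  simp [Fin.sum_univ_three] at h5
  linear_combination h5

lemma trace_eq' (T : E →L[ℂ] E) (k k₁ : E →L[ℂ] ℂ) (u u₁ : E)
    (h : k.smulRight u = k₁.smulRight u₁) :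
    k (T u) = k₁ (T u₁) := by
  simpa using trace_sub T k k₁ 0 u u₁ 0 (by rw [h]; ext; simp)

lemma rankone_of_minors (N : E →L[ℂ] E)
    (h : ∀ (g g' : E →L[ℂ] ℂ) z w, g (N z) * g' (N w) = g (N w) * g' (N z)) :
    ∃ (k : E →L[ℂ] ℂ) (u : E), N = k.smulRight u := by
  by_cases h0 : ∃ z, N z ≠ 0
  · obtain ⟨z, hz⟩ := h0
    obtain ⟨g, hg⟩ := SeparatingDual.exists_eq_one (R := ℂ) hz
    refine ⟨g.comp N, N z, ?_⟩
    ext w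
    rw [SeparatingDual.eq_iff_forall_dual_eq (R := ℂ)]
    intro g'
    have := h g g' z w
    rw [hg, one_mul] at this
    simpa using this
  · push Not at h0
    exact ⟨0, 0, by ext z; simp [h0]⟩

lemma rankone_limit (N N' : E →L[ℂ] E)
    (h : ∀ t : ℂ, t ≠ 0 → ∃ (k : E →L[ℂ] ℂ) (u : E), N + t • N' = k.smulRight u) :
    ∃ (k : E →L[ℂ] ℂ) (u : E), N = k.smulRight u := by
  apply rankone_of_minors
  intro g g' z w
  have key : ∀ t : ℂ, t ≠ 0 → (g (N z) + t * g (N' z)) * (g' (N w) + t * g' (N' w))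
      = (g (N w) + t * g (N' w)) * (g' (N z) + t * g' (N' z)) := by
    intro t ht
    obtain ⟨k, u, hk⟩ := h t ht
    have h1 : ∀ (g : E →L[ℂ] ℂ) z, g (N z) + t * g (N' z) = k z * g u := by
      intro g z
      have := congrArg (fun S : E →L[ℂ] E => g (S z)) hk
      simpa using this
    rw [h1, h1, h1, h1]; ring
  have h1 := key 1 one_ne_zero
  have h2 := key (-1) (by simp)
  have h3 := key 2 two_ne_zero
  linear_combination h1 + (1/3) * h2 - (1/3) * h3

lemma key_all (A : Subalgebra ℂ (E →L[ℂ] E)) (φ : A → A) (m : ℕ)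
    (hR : ∀ (f : E →L[ℂ] ℂ) x (g : E →L[ℂ] ℂ) y, ∃ a : A,
      (φ a : E →L[ℂ] E) = f.smulRight x + g.smulRight y)
    (H : ∀ (f : E →L[ℂ] ℂ) (x : E), f x = 1 →
      ∃ (k : E →L[ℂ] ℂ) (u : E), (∀ a : A, k ((φ a : E →L[ℂ] E) u) = f ((a : E →L[ℂ] E) x)) ∧
      (k u) ^ m = 1) :
    ∃ M : E →ₗ[ℂ] (E →L[ℂ] ℂ) →ₗ[ℂ] (E →L[ℂ] E), ∀ x f, ∃ (k : E →L[ℂ] ℂ) (u : E),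
      M x f = k.smulRight u ∧
      (∀ a : A, k ((φ a : E →L[ℂ] E) u) = f ((a : E →L[ℂ] E) x)) ∧
      (f x ≠ 0 → (k u) ^ m = (f x) ^ m) := by
  have hR1 : ∀ (g : E →L[ℂ] ℂ) (y : E), ∃ a : A, (φ a : E →L[ℂ] E) = g.smulRight y := by
    intro g y
    obtain ⟨a, ha⟩ := hR g y 0 0
    refine ⟨a, ha.trans ?_⟩
    ext; simp
  choose c hc using hR1
  -- pairing determines operators
  have huniq : ∀ N N' : E →L[ℂ] E, (∀ (g : E →L[ℂ] ℂ) y, g (N y) = g (N' y)) → N = N' := by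
    intro N N' h
    ext y
    rw [SeparatingDual.eq_iff_forall_dual_eq (R := ℂ)]
    intro g
    exact h g y
  have hpair : ∀ (f k : E →L[ℂ] ℂ) (x u : E),
      (∀ a : A, k ((φ a : E →L[ℂ] E) u) = f ((a : E →L[ℂ] E) x)) →
      ∀ (g : E →L[ℂ] ℂ) y, g ((k.smulRight u) y) = f ((c g y : E →L[ℂ] E) x) := by
    intro f k x u h g y
    rw [← h, hc]
    simp [mul_comm]
  have Hne : ∀ (f : E →L[ℂ] ℂ) (x : E), f x ≠ 0 →
      ∃ (k : E →L[ℂ] ℂ) (u : E), (∀ a : A, k ((φ a : E →L[ℂ] E) u) = f ((a : E →L[ℂ] E) x)) ∧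
      (k u) ^ m = (f x) ^ m := by
    intro f x hfx
    obtain ⟨k, u, h1, h2⟩ := H ((f x)⁻¹ • f) x (by simp [hfx])
    refine ⟨f x • k, u, ?_, ?_⟩
    · intro a
      have := h1 a
      simp at this ⊢
      rw [this, mul_inv_cancel_left₀ hfx]
    · simp [mul_pow, h2]
  have Hall : ∀ (x : E) (f : E →L[ℂ] ℂ),
      ∃ (N : E →L[ℂ] E) (k : E →L[ℂ] ℂ) (u : E), N = k.smulRight u ∧
        (∀ a : A, k ((φ a : E →L[ℂ] E) u) = f ((a : E →L[ℂ] E) x)) ∧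
      (f x ≠ 0 → (k u) ^ m = (f x) ^ m) := by
    intro x f
    by_cases hfx : f x = 0
    · by_cases hx : x = 0
      · exact ⟨_, 0, 0, rfl, by simp [hx], fun h => absurd hfx h⟩
      obtain ⟨f', hf'⟩ := SeparatingDual.exists_eq_one (R := ℂ) hx
      obtain ⟨k₁, u₁, h1, -⟩ := Hne (f + f') x (by simp [hfx, hf'])
      obtain ⟨k₂, u₂, h2, -⟩ := Hne f' x (by simp [hf'])
      obtain ⟨k, u, hk⟩ := rankone_limit (k₁.smulRight u₁ - k₂.smulRight u₂) (k₂.smulRight u₂) (by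
        intro t ht
        obtain ⟨k₃, u₃, h3, -⟩ := Hne (f + t • f') x (by simp [hfx, hf', ht])
        refine ⟨k₃, u₃, ?_⟩
        apply huniq
        intro g y
        rw [hpair _ _ _ _ h3]
        have e1 := hpair _ _ _ _ h1 g y
        have e2 := hpair _ _ _ _ h2 g y
        simp only [add_apply, sub_apply, smul_apply, map_add, map_sub, map_smul] at e1 e2 ⊢
        rw [e1, e2]; simp)
      refine ⟨_, k, u, rfl, ?_, fun h => absurd hfx h⟩
      intro a
      rw [trace_sub _ k k₁ k₂ u u₁ u₂ hk.symm, h1, h2]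
      simp
    · obtain ⟨k, u, h1, h2⟩ := Hne f x hfx
      exact ⟨_, k, u, rfl, h1, fun _ => h2⟩
  choose M k u hM hk hm using Hall
  have hMp : ∀ x f (g : E →L[ℂ] ℂ) y, g (M x f y) = f ((c g y : E →L[ℂ] E) x) := by
    intro x f g y
    rw [hM]; exact hpair _ _ _ _ (hk x f) g y
  refine ⟨LinearMap.mk₂ ℂ M ?_ ?_ ?_ ?_, ?_⟩
  · intro x x' f; apply huniq; intro g y; simp [hMp]
  · intro t x f; apply huniq; intro g y; simp [hMp]
  · intro x f f'; apply huniq; intro g y; simp [hMp]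
  · intro t x f; apply huniq; intro g y; simp [hMp]
  · intro x f
    exact ⟨k x f, u x f, hM x f, hk x f, hm x f⟩
lemma share (k₀ : E →L[ℂ] ℂ) (u₀ : E) (hk₀ : k₀ ≠ 0) (hu₀ : u₀ ≠ 0) (N : E →L[ℂ] E)
    (h1 : ∃ (k : E →L[ℂ] ℂ) (u : E), N = k.smulRight u)
    (h2 : ∃ (k : E →L[ℂ] ℂ) (u : E), N + k₀.smulRight u₀ = k.smulRight u) :
    (∃ k : E →L[ℂ] ℂ, N = k.smulRight u₀) ∨ (∃ u : E, N = k₀.smulRight u) := by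
  obtain ⟨k, u, rfl⟩ := h1
  obtain ⟨k', u', h2⟩ := h2
  have h3 : ∀ (g : E →L[ℂ] ℂ) z, k z * g u + k₀ z * g u₀ = k' z * g u' := by
    intro g z
    have := congrArg (fun S : E →L[ℂ] E => g (S z)) h2
    simpa using this
  have h4 : ∀ (g g' : E →L[ℂ] ℂ) z w,
      (k z * k₀ w - k w * k₀ z) * (g u * g' u₀ - g u₀ * g' u) = 0 := by
    intro g g' z w
    linear_combination (k w * g' u + k₀ w * g' u₀) * h3 g z + (k' z * g u') * h3 g' w
      - (k z * g' u + k₀ z * g' u₀) * h3 g w - (k' w * g u') * h3 g' z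
  obtain ⟨g₀, hg₀⟩ := SeparatingDual.exists_eq_one (R := ℂ) hu₀
  obtain ⟨z₀, hz₀⟩ : ∃ z, k₀ z ≠ 0 := by
    by_contra hcon
    push Not at hcon
    exact hk₀ (ContinuousLinearMap.ext hcon)
  by_cases h5 : ∀ z w, k z * k₀ w - k w * k₀ z = 0
  · right
    refine ⟨((k₀ z₀)⁻¹ * k z₀) • u, ?_⟩
    ext z
    have h6 : k z = k₀ z * ((k₀ z₀)⁻¹ * k z₀) := by
      field_simp
      linear_combination h5 z z₀
    simp [smul_smul, h6]
  · left
    push Not at h5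
    obtain ⟨z, w, h5⟩ := h5
    have h6 : u = g₀ u • u₀ := by
      rw [SeparatingDual.eq_iff_forall_dual_eq (R := ℂ)]
      intro g'
      have h7 := (mul_eq_zero.1 (h4 g₀ g' z w)).resolve_left h5
      rw [hg₀] at h7
      simp
      linear_combination -h7
    refine ⟨g₀ u • k, ?_⟩
    ext z
    conv_lhs => rw [h6]
    simp [smul_smul, mul_comm]

section classification

variable {X Y : Type*} [AddCommGroup X] [Module ℂ X] [AddCommGroup Y] [Module ℂ Y]

lemma class_LR (M : X →ₗ[ℂ] Y →ₗ[ℂ] (E →L[ℂ] E))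
    (h1 : ∀ x y, ∃ (k : E →L[ℂ] ℂ) (u : E), M x y = k.smulRight u)
    (h2 : ∀ x y x' y' (c : ℂ), x ≠ 0 → y ≠ 0 → M x y = c • M x' y' →
      (∃ d : ℂ, x = d • x') ∧ (∃ d : ℂ, y = d • y'))
    (x₀ : X) (y₀ : Y) (hx₀ : x₀ ≠ 0) (hy₀ : y₀ ≠ 0) (k₀ : E →L[ℂ] ℂ) (u₀ : E)
    (h0 : M x₀ y₀ = k₀.smulRight u₀) (hk₀ : k₀ ≠ 0) (hu₀ : u₀ ≠ 0)
    (hL : ∀ y, ∃ k : E →L[ℂ] ℂ, M x₀ y = k.smulRight u₀)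
    (hR : ∀ x, ∃ u : E, M x y₀ = k₀.smulRight u) :
    ∃ (U : X →ₗ[ℂ] E) (V : Y →ₗ[ℂ] (E →L[ℂ] ℂ)), ∀ x y, M x y = (V y).smulRight (U x) := by
  obtain ⟨g₀, hg₀⟩ := SeparatingDual.exists_eq_one (R := ℂ) hu₀
  obtain ⟨z₀, hz₀⟩ : ∃ z, k₀ z = 1 := by
    obtain ⟨z, hz⟩ : ∃ z, k₀ z ≠ 0 := by
      by_contra hcon
      push Not at hcon
      exact hk₀ (ContinuousLinearMap.ext hcon)
    exact ⟨(k₀ z)⁻¹ • z, by simp [hz]⟩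
  let U : X →ₗ[ℂ] E :=
    { toFun := fun x => M x y₀ z₀
      map_add' := by intro x x'; simp
      map_smul' := by intro c x; simp }
  let V : Y →ₗ[ℂ] (E →L[ℂ] ℂ) :=
    { toFun := fun y => g₀.comp (M x₀ y)
      map_add' := by intro x x'; ext; simp
      map_smul' := by intro c x; ext; simp }
  have hU : ∀ x, M x y₀ = k₀.smulRight (U x) := by
    intro x
    obtain ⟨u, hu⟩ := hR x
    have : U x = u := by simp [U, hu, hz₀]
    rw [this, hu]
  have hV : ∀ y, M x₀ y = (V y).smulRight u₀ := by
    intro y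
    obtain ⟨k, hk⟩ := hL y
    have : V y = k := by ext z; simp [V, hk, hg₀]
    rw [this, hk]
  have hU0 : U x₀ = u₀ := by simp [U, h0, hz₀]
  have hV0 : V y₀ = k₀ := by ext z; simp [V, h0, hg₀]
  refine ⟨U, V, ?_⟩
  intro x y
  by_cases hx : ∃ d : ℂ, x = d • x₀
  · obtain ⟨d, rfl⟩ := hx
    rw [map_smul, map_smul, hU0, LinearMap.smul_apply, hV]
    ext z; simp [smul_smul, mul_comm]
  by_cases hy : ∃ d : ℂ, y = d • y₀
  · obtain ⟨d, rfl⟩ := hy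
    rw [map_smul, map_smul, hV0, hU]
    ext z; simp [smul_smul, mul_comm]
  have hx0 : x ≠ 0 := fun h => hx ⟨0, by simp [h]⟩
  have hy0 : y ≠ 0 := fun h => hy ⟨0, by simp [h]⟩
  have hUx : ∀ d : ℂ, U x ≠ d • u₀ := by
    intro d hd
    refine hx (h2 x y₀ x₀ y₀ d hx0 hy₀ ?_).1
    rw [hU, hd, h0]; ext z; simp [smul_smul, mul_comm]
  have hVy : ∀ d : ℂ, V y ≠ d • k₀ := by
    intro d hd
    refine hy (h2 x₀ y x₀ y₀ d hx₀ hy0 ?_).2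
    rw [hV, hd, h0]; ext z; simp [smul_smul]
  have hUx0 : U x ≠ 0 := by simpa using hUx 0
  have hVy0 : V y ≠ 0 := fun h => hVy 0 (by rw [h]; ext; simp)
  have hN0 : M x y ≠ 0 := by
    intro h
    obtain ⟨⟨d, hd⟩, -⟩ := h2 x y 0 0 0 hx0 hy0 (by simp [h])
    exact hx0 (by simpa using hd)
  obtain ⟨z, hz⟩ : ∃ z, M x y z ≠ 0 := by
    by_contra hcon
    push Not at hcon
    exact hN0 (ContinuousLinearMap.ext hcon)
  have s1 := share k₀ (U x) hk₀ hUx0 (M x y) (h1 x y) (by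
    rw [← hU, ← map_add]; exact h1 _ _)
  have s2 := share (V y) u₀ hVy0 hu₀ (M x y) (h1 x y) (by
    rw [← hV, ← LinearMap.add_apply, ← map_add]; exact h1 _ _)
  rcases s1 with ⟨k1, s1⟩ | ⟨u1, s1⟩
  · rcases s2 with ⟨k2, s2⟩ | ⟨u2, s2⟩
    · exfalso
      have e1 : M x y z = k1 z • U x := by rw [s1]; simp
      have e2 : M x y z = k2 z • u₀ := by rw [s2]; simp
      have hk1 : k1 z ≠ 0 := by intro h; rw [h, zero_smul] at e1; exact hz e1
      refine hUx ((k1 z)⁻¹ * k2 z) ?_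
      rw [← smul_smul, ← e2, e1, smul_smul, inv_mul_cancel₀ hk1, one_smul]
    · have e1 : M x y z = k1 z • U x := by rw [s1]; simp
      have e2 : M x y z = (V y) z • u2 := by rw [s2]; simp
      have hk2 : (V y) z ≠ 0 := by intro h; rw [h, zero_smul] at e2; exact hz e2
      have hu2 : u2 = (((V y) z)⁻¹ * k1 z) • U x := by
        rw [← smul_smul, ← e1, e2, smul_smul, inv_mul_cancel₀ hk2, one_smul]
      set d := ((V y) z)⁻¹ * k1 z
      rw [hu2] at s2
      suffices hd : d = 1 by rw [s2, hd, one_smul]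
      obtain ⟨k3, u3, h3⟩ := h1 (x + x₀) (y + y₀)
      have h4 : ∀ (g : E →L[ℂ] ℂ) z, V y z * (d * g (U x)) + k₀ z * g (U x) + V y z * g u₀
          + k₀ z * g u₀ = k3 z * g u3 := by
        intro g z
        have := congrArg (fun S : E →L[ℂ] E => g (S z)) h3
        simp only [map_add, LinearMap.add_apply, s2, hU, hV, h0, hV0, hU0] at this
        simp at this
        rw [← this]; ring
      have h5 : ∀ (g g' : E →L[ℂ] ℂ) z w, (d - 1) * ((V y z * k₀ w - V y w * k₀ z) *
          (g (U x) * g' u₀ - g u₀ * g' (U x))) = 0 := by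
        intro g g' z w
        have a1 := h4 g z
        have a2 := h4 g' w
        have a3 := h4 g w
        have a4 := h4 g' z
        have : (k3 z * g u3) * (k3 w * g' u3) - (k3 w * g u3) * (k3 z * g' u3) = 0 := by ring
        rw [← a1, ← a2, ← a3, ← a4] at this
        linear_combination this
      by_contra hd
      have hd' : d - 1 ≠ 0 := sub_ne_zero.2 hd
      obtain ⟨w, hw⟩ : ∃ w, V y w * k₀ z₀ - V y z₀ * k₀ w ≠ 0 := by
        by_contra hcon
        push Not at hcon
        refine hVy (V y z₀) ?_
        ext w
        have := hcon w
        rw [hz₀] at this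
        simp
        linear_combination this
      obtain ⟨g, hg⟩ : ∃ g : E →L[ℂ] ℂ, g (U x) * g₀ u₀ - g u₀ * g₀ (U x) ≠ 0 := by
        by_contra hcon
        push Not at hcon
        refine hUx (g₀ (U x)) ?_
        rw [SeparatingDual.eq_iff_forall_dual_eq (R := ℂ)]
        intro g
        have := hcon g
        rw [hg₀] at this
        rw [map_smul, smul_eq_mul]
        linear_combination this
      exact mul_ne_zero hd' (mul_ne_zero hw hg) (h5 g g₀ w z₀)
  · exfalso
    rcases s2 with ⟨k2, s2⟩ | ⟨u2, s2⟩
    · have hu1 : u1 = k2 z₀ • u₀ := by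
        have e1 : M x y z₀ = k₀ z₀ • u1 := by rw [s1]; simp
        have e2 : M x y z₀ = k2 z₀ • u₀ := by rw [s2]; simp
        rw [← e2, e1, hz₀, one_smul]
      refine hx (h2 x y x₀ y₀ (k2 z₀) hx0 hy0 ?_).1
      rw [s1, hu1, h0]; ext z; simp [smul_smul, mul_comm]
    · have hu1 : u1 ≠ 0 := by
        rintro rfl
        rw [s1] at hz; simp at hz
      have hu2 : u2 ≠ 0 := by
        rintro rfl
        rw [s2] at hz; simp at hz
      obtain ⟨g, hg⟩ := SeparatingDual.exists_eq_one (R := ℂ) hu2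
      refine hVy (g u1) ?_
      ext w
      have e1 : g (M x y w) = k₀ w * g u1 := by rw [s1]; simp
      have e2 : g (M x y w) = V y w * g u2 := by rw [s2]; simp
      rw [hg] at e2
      simp
      linear_combination e1 - e2

lemma union_aux {S T : Submodule ℂ X} (h : ∀ x, x ∈ S ∨ x ∈ T) : (∀ x, x ∈ S) ∨ (∀ x, x ∈ T) := by
  by_contra hcon
  push Not at hcon
  obtain ⟨⟨a, ha⟩, ⟨b, hb⟩⟩ := hcon
  have ha' := (h a).resolve_left ha
  have hb' := (h b).resolve_right hb
  rcases h (a + b) with h1 | h1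
  · exact ha ((Submodule.add_mem_iff_left _ hb').1 h1)
  · exact hb ((Submodule.add_mem_iff_right _ ha').1 h1)

lemma classify (M : X →ₗ[ℂ] Y →ₗ[ℂ] (E →L[ℂ] E))
    (h1 : ∀ x y, ∃ (k : E →L[ℂ] ℂ) (u : E), M x y = k.smulRight u)
    (h2 : ∀ x y x' y' (c : ℂ), x ≠ 0 → y ≠ 0 → M x y = c • M x' y' →
      (∃ d : ℂ, x = d • x') ∧ (∃ d : ℂ, y = d • y'))
    (h3 : ∀ (g : E →L[ℂ] ℂ) (z : E), g ≠ 0 → z ≠ 0 → ∃ x y, g (M x y z) ≠ 0)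
    (x₀ : X) (y₀ : Y) (hx₀ : x₀ ≠ 0) (hy₀ : y₀ ≠ 0) :
    (∃ (U : X →ₗ[ℂ] E) (V : Y →ₗ[ℂ] (E →L[ℂ] ℂ)), ∀ x y, M x y = (V y).smulRight (U x)) ∨
    (∃ (U : Y →ₗ[ℂ] E) (V : X →ₗ[ℂ] (E →L[ℂ] ℂ)), ∀ x y, M x y = (V x).smulRight (U y)) := by
  obtain ⟨k₀, u₀, h0⟩ := h1 x₀ y₀
  have hne : ∀ x y, x ≠ 0 → y ≠ 0 → M x y ≠ 0 := by
    intro x y hx0 hy0 h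
    obtain ⟨⟨d, hd⟩, -⟩ := h2 x y 0 0 0 hx0 hy0 (by simp [h])
    exact hx0 (by simpa using hd)
  have hk₀ : k₀ ≠ 0 := by
    rintro rfl
    exact hne _ _ hx₀ hy₀ (by rw [h0]; ext; simp)
  have hu₀ : u₀ ≠ 0 := by
    rintro rfl
    exact hne _ _ hx₀ hy₀ (by rw [h0]; ext; simp)
  obtain ⟨g₀, hg₀⟩ := SeparatingDual.exists_eq_one (R := ℂ) hu₀
  obtain ⟨z₀, hz₀⟩ : ∃ z, k₀ z = 1 := by
    obtain ⟨z, hz⟩ : ∃ z, k₀ z ≠ 0 := by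
      by_contra hcon
      push Not at hcon
      exact hk₀ (ContinuousLinearMap.ext hcon)
    exact ⟨(k₀ z)⁻¹ • z, by simp [hz]⟩
  have hg₀0 : g₀ ≠ 0 := by rintro rfl; simp at hg₀
  have hz₀0 : z₀ ≠ 0 := by rintro rfl; simp at hz₀
  let PL : Submodule ℂ (E →L[ℂ] E) :=
    { carrier := {N | ∃ k : E →L[ℂ] ℂ, N = k.smulRight u₀}
      zero_mem' := ⟨0, by ext; simp⟩
      add_mem' := by
        rintro _ _ ⟨k, rfl⟩ ⟨k', rfl⟩
        exact ⟨k + k', by ext; simp [add_smul]⟩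
      smul_mem' := by
        rintro c _ ⟨k, rfl⟩
        exact ⟨c • k, by ext; simp [smul_smul]⟩ }
  let PR : Submodule ℂ (E →L[ℂ] E) :=
    { carrier := {N | ∃ u : E, N = k₀.smulRight u}
      zero_mem' := ⟨0, by ext; simp⟩
      add_mem' := by
        rintro _ _ ⟨k, rfl⟩ ⟨k', rfl⟩
        exact ⟨k + k', by ext; simp⟩
      smul_mem' := by
        rintro c _ ⟨k, rfl⟩
        exact ⟨c • k, by ext; simp [smul_smul, mul_comm]⟩ }
  have hyu : (∀ y, M x₀ y ∈ PL) ∨ (∀ y, M x₀ y ∈ PR) := by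
    have := union_aux (S := PL.comap (M x₀)) (T := PR.comap (M x₀)) (by
      intro y
      exact share k₀ u₀ hk₀ hu₀ _ (h1 x₀ y) (by rw [← h0, ← map_add]; exact h1 _ _))
    exact this
  have hxu : (∀ x, M x y₀ ∈ PL) ∨ (∀ x, M x y₀ ∈ PR) := by
    have := union_aux (S := PL.comap (M.flip y₀)) (T := PR.comap (M.flip y₀)) (by
      intro x
      exact share k₀ u₀ hk₀ hu₀ _ (h1 x y₀)
        (by rw [← h0, LinearMap.flip_apply, ← LinearMap.add_apply, ← map_add]; exact h1 _ _))
    exact this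
  rcases hyu with hy | hy <;> rcases hxu with hx | hx
  · -- LL
    left
    have hall : ∀ x y, M x y ∈ PL := by
      intro x y
      by_cases hxx : ∃ d : ℂ, x = d • x₀
      · obtain ⟨d, rfl⟩ := hxx
        rw [map_smul, LinearMap.smul_apply]
        exact PL.smul_mem _ (hy y)
      by_cases hyy : ∃ d : ℂ, y = d • y₀
      · obtain ⟨d, rfl⟩ := hyy
        rw [map_smul]
        exact PL.smul_mem _ (hx x)
      have hx0 : x ≠ 0 := fun h => hxx ⟨0, by simp [h]⟩
      have hy0 : y ≠ 0 := fun h => hyy ⟨0, by simp [h]⟩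
      obtain ⟨k1, e1⟩ := hy y
      obtain ⟨k2, e2⟩ := hx x
      have hk1 : k1 ≠ 0 := by
        rintro rfl
        exact hne _ _ hx₀ hy0 (by rw [e1]; ext; simp)
      have hk2 : k2 ≠ 0 := by
        rintro rfl
        exact hne _ _ hx0 hy₀ (by rw [e2]; ext; simp)
      have s1 := share k1 u₀ hk1 hu₀ (M x y) (h1 x y) (by
        rw [← e1, ← LinearMap.add_apply, ← map_add]; exact h1 _ _)
      have s2 := share k2 u₀ hk2 hu₀ (M x y) (h1 x y) (by
        rw [← e2, ← map_add]; exact h1 _ _)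
      rcases s1 with s1 | ⟨u1, s1⟩
      · exact s1
      rcases s2 with s2 | ⟨u2, s2⟩
      · exact s2
      exfalso
      have hu2 : u2 ≠ 0 := by
        rintro rfl
        exact hne _ _ hx0 hy0 (by rw [s2]; ext; simp)
      obtain ⟨g, hg⟩ := SeparatingDual.exists_eq_one (R := ℂ) hu2
      refine hxx (h2 x y₀ x₀ y (g u1) hx0 hy₀ ?_).1
      rw [e2, e1]
      ext w
      have e1 : g (M x y w) = k1 w * g u1 := by rw [s1]; simp
      have e2 : g (M x y w) = k2 w * g u2 := by rw [s2]; simp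
      rw [hg, mul_one] at e2
      simp [smul_smul, ← e2, e1, mul_comm]
    have hE : ∀ v, v = g₀ v • u₀ := by
      intro v
      by_contra hv
      obtain ⟨g', hg'⟩ := SeparatingDual.exists_eq_one (R := ℂ) (sub_ne_zero.2 hv)
      have hg0 : g' - g' u₀ • g₀ ≠ 0 := by
        intro h
        have := congrArg (fun g : E →L[ℂ] ℂ => g (v - g₀ v • u₀)) h
        simp [hg₀] at this
        simp at hg'
        rw [hg'] at this
        exact one_ne_zero this
      obtain ⟨x, y, hxy⟩ := h3 _ z₀ hg0 hz₀0
      obtain ⟨k, hk⟩ := hall x y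
      rw [hk] at hxy
      simp [hg₀] at hxy
    refine class_LR M h1 h2 x₀ y₀ hx₀ hy₀ k₀ u₀ h0 hk₀ hu₀ hy ?_
    intro x
    obtain ⟨k, hk⟩ := hx x
    refine ⟨k z₀ • u₀, ?_⟩
    rw [hk]
    ext w
    have hw : w = k₀ w • z₀ := by
      have a3 : k₀ z₀ = g₀ z₀ * k₀ u₀ := by
        have := congrArg k₀ (hE z₀)
        simpa using this
      have a4 : k₀ w = g₀ w * k₀ u₀ := by
        have := congrArg k₀ (hE w)
        simpa using this
      rw [hz₀] at a3
      calc w = g₀ w • u₀ := hE w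
        _ = (k₀ w * g₀ z₀) • u₀ := by
          congr 1
          rw [a4]
          linear_combination (g₀ w) * a3
        _ = k₀ w • z₀ := by rw [← smul_smul, ← hE z₀]
    conv_lhs => rw [hw]
    simp [smul_smul]
  · left
    exact class_LR M h1 h2 x₀ y₀ hx₀ hy₀ k₀ u₀ h0 hk₀ hu₀ hy hx
  · right
    obtain ⟨U, V, hUV⟩ := class_LR M.flip (fun y x => h1 x y)
      (fun y x y' x' c hy hx h => (h2 x y x' y' c hx hy h).symm) y₀ x₀ hy₀ hx₀ k₀ u₀ h0 hk₀ hu₀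
      hx hy
    exact ⟨U, V, fun x y => hUV y x⟩
  · -- RR
    left
    have hall : ∀ x y, M x y ∈ PR := by
      intro x y
      by_cases hxx : ∃ d : ℂ, x = d • x₀
      · obtain ⟨d, rfl⟩ := hxx
        rw [map_smul, LinearMap.smul_apply]
        exact PR.smul_mem _ (hy y)
      by_cases hyy : ∃ d : ℂ, y = d • y₀
      · obtain ⟨d, rfl⟩ := hyy
        rw [map_smul]
        exact PR.smul_mem _ (hx x)
      have hx0 : x ≠ 0 := fun h => hxx ⟨0, by simp [h]⟩
      have hy0 : y ≠ 0 := fun h => hyy ⟨0, by simp [h]⟩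
      obtain ⟨k1, e1⟩ := hy y
      obtain ⟨k2, e2⟩ := hx x
      have hk1 : k1 ≠ 0 := by
        rintro rfl
        exact hne _ _ hx₀ hy0 (by rw [e1]; ext; simp)
      have hk2 : k2 ≠ 0 := by
        rintro rfl
        exact hne _ _ hx0 hy₀ (by rw [e2]; ext; simp)
      have s1 := share k₀ k1 hk₀ hk1 (M x y) (h1 x y) (by
        rw [← e1, ← LinearMap.add_apply, ← map_add]; exact h1 _ _)
      have s2 := share k₀ k2 hk₀ hk2 (M x y) (h1 x y) (by
        rw [← e2, ← map_add]; exact h1 _ _)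
      rcases s1 with ⟨u1, s1⟩ | s1
      swap
      · exact s1
      rcases s2 with ⟨u2, s2⟩ | s2
      swap
      · exact s2
      exfalso
      obtain ⟨w, hw⟩ : ∃ w, u2 w ≠ 0 := by
        by_contra hcon
        push Not at hcon
        exact hne _ _ hx0 hy0 (by rw [s2]; ext w; simp [hcon])
      refine hxx (h2 x y₀ x₀ y ((u2 w)⁻¹ * u1 w) hx0 hy₀ ?_).1
      have e3 : M x y w = u1 w • k1 := by rw [s1]; simp
      have e4 : M x y w = u2 w • k2 := by rw [s2]; simp
      have e5 : k2 = ((u2 w)⁻¹ * u1 w) • k1 := by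
        rw [← smul_smul, ← e3, e4, smul_smul, inv_mul_cancel₀ hw, one_smul]
      rw [e2, e1, e5]
      ext v
      simp only [smul_apply, smulRight_apply, smul_smul]
      congr 1
      ring
    have hE : ∀ v, v = k₀ v • z₀ := by
      intro v
      by_contra hv
      obtain ⟨x, y, hxy⟩ := h3 g₀ _ hg₀0 (sub_ne_zero.2 hv)
      obtain ⟨u, hu⟩ := hall x y
      rw [hu] at hxy
      simp [hz₀] at hxy
    refine class_LR M h1 h2 x₀ y₀ hx₀ hy₀ k₀ u₀ h0 hk₀ hu₀ ?_ hx
    intro y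
    refine ⟨g₀.comp (M x₀ y), ?_⟩
    ext w
    have hE' : ∀ v, v = g₀ v • u₀ := by
      intro v
      have a1 := hE v
      have a2 := hE u₀
      have a3 : g₀ u₀ = k₀ u₀ * g₀ z₀ := by conv_lhs => rw [a2]; simp
      have a4 : g₀ v = k₀ v * g₀ z₀ := by conv_lhs => rw [a1]; simp
      rw [hg₀] at a3
      rw [a4, a2, smul_smul]
      conv_lhs => rw [a1]
      congr 1
      linear_combination (k₀ v) * a3
    exact hE' _

end classification
section closing

variable [CompleteSpace E]
  {X Z : Type*} [NormedAddCommGroup X] [NormedSpace ℂ X] [CompleteSpace X]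
  [NormedAddCommGroup Z] [NormedSpace ℂ Z] [CompleteSpace Z]

theorem close_aux (B : Z →L[ℂ] X →L[ℂ] ℂ) (ζ : ℂ) (hζ : ζ ≠ 0)
    (hB : ∀ (x : X) (c : ℝ), 0 ≤ c → (∀ z, ‖B z x‖ ≤ c * ‖z‖) → ‖x‖ ≤ c)
    (U : X →ₗ[ℂ] E) (W : Z →ₗ[ℂ] (E →L[ℂ] ℂ))
    (hWU : ∀ z x, W z (U x) = ζ * B z x)
    (hsep : ∀ y, (∀ z, W z y = 0) → y = 0)
    (hdense : ∀ g : E →L[ℂ] ℂ, (∀ x, g (U x) = 0) → g = 0) :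
    ∃ S : X ≃L[ℂ] E, ∀ (T : E →L[ℂ] E) (D : X →L[ℂ] X),
      (∀ z x, W z (T (U x)) = B z (D x)) →
      T = ζ⁻¹ • ((S : X →L[ℂ] E) ∘L D ∘L (S.symm : E →L[ℂ] X)) := by
  have hUc : Continuous U := by
    apply LinearMap.continuous_of_seq_closed_graph
    intro u x y hu hUu
    rw [← sub_eq_zero]
    apply hsep
    intro z
    rw [map_sub, sub_eq_zero]
    have h1 := ((W z).continuous.tendsto y).comp hUu
    have h2 := (((B z).continuous.tendsto x).comp hu).const_mul ζ
    rw [hWU]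
    refine tendsto_nhds_unique h1 (h2.congr ?_)
    intro n
    simp [hWU]
  have hWc : Continuous W := by
    apply LinearMap.continuous_of_seq_closed_graph
    intro u z g hu hWu
    rw [← sub_eq_zero]
    apply hdense
    intro x
    rw [sub_apply, sub_eq_zero, hWU]
    have h1 := ((ContinuousLinearMap.apply ℂ ℂ (U x)).continuous.tendsto g).comp hWu
    have h2 := (((B.flip x).continuous.tendsto z).comp hu).const_mul ζ
    refine tendsto_nhds_unique h1 (h2.congr ?_)
    intro n
    simp [hWU]
  let U' : X →L[ℂ] E := ⟨U, hUc⟩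
  let W' : Z →L[ℂ] (E →L[ℂ] ℂ) := ⟨W, hWc⟩
  have hbd : ∀ x, ‖x‖ ≤ (‖ζ‖⁻¹ * ‖W'‖) * ‖U' x‖ := by
    intro x
    apply hB _ _ (by positivity)
    intro z
    have h1 : B z x = ζ⁻¹ * W' z (U' x) := by
      show B z x = ζ⁻¹ * W z (U x)
      rw [hWU, inv_mul_cancel_left₀ hζ]
    rw [h1, norm_mul, norm_inv]
    calc ‖ζ‖⁻¹ * ‖W' z (U' x)‖ ≤ ‖ζ‖⁻¹ * (‖W'‖ * ‖z‖ * ‖U' x‖) := by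
          gcongr
          exact W'.le_opNorm₂ z (U' x)
      _ = _ := by ring
  have hanti : AntilipschitzWith (‖ζ‖₊⁻¹ * ‖W'‖₊) U' :=
    AddMonoidHomClass.antilipschitz_of_bound U' hbd
  have hclosed : IsClosed (Set.range U') := hanti.isClosed_range U'.uniformContinuous
  have hker : U'.ker = ⊥ := LinearMap.ker_eq_bot.2 hanti.injective
  have hran : U'.range = ⊤ := by
    by_contra hne
    obtain ⟨y, hy⟩ : ∃ y, y ∉ U'.range := by
      by_contra hcon
      push Not at hcon
      exact hne (eq_top_iff.2 fun y _ => hcon y)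
    have hcl : IsClosed (U'.range : Set E) := by
      convert hclosed
      ext; simp
    haveI : IsClosed (U'.range : Set E) := hcl
    have hq : U'.range.mkQL y ≠ 0 := by
      intro h
      exact hy ((Submodule.Quotient.mk_eq_zero _).1 h)
    obtain ⟨g, hg⟩ := SeparatingDual.exists_eq_one (R := ℂ) hq
    have h0 := hdense (g.comp U'.range.mkQL) (by
      intro x
      have : U'.range.mkQL (U x) = 0 := (Submodule.Quotient.mk_eq_zero _).2 ⟨x, rfl⟩
      rw [ContinuousLinearMap.comp_apply, this, map_zero])
    have h1 := congrArg (fun g : E →L[ℂ] ℂ => g y) h0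
    rw [ContinuousLinearMap.comp_apply, hg] at h1
    exact one_ne_zero h1
  refine ⟨ContinuousLinearEquiv.ofBijective U' hker hran, ?_⟩
  intro T D h
  ext y
  obtain ⟨x, rfl⟩ := (ContinuousLinearEquiv.ofBijective U' hker hran).surjective y
  rw [← sub_eq_zero]
  apply hsep
  intro z
  have e1 : W z (T ((ContinuousLinearEquiv.ofBijective U' hker hran) x)) = B z (D x) := h z x
  have e2 : W z ((ContinuousLinearEquiv.ofBijective U' hker hran) (D x)) = ζ * B z (D x) :=
    hWU z (D x)
  rw [map_sub, e1]
  simp only [smul_apply, ContinuousLinearMap.comp_apply, ContinuousLinearEquiv.coe_coe,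
    ContinuousLinearEquiv.symm_apply_apply, map_smul]
  rw [e2]
  simp [hζ]

end closing

theorem beta_aux {X Y : Type*} [AddCommGroup X] [Module ℂ X] [AddCommGroup Y] [Module ℂ Y]
    (P β : X →ₗ[ℂ] Y →ₗ[ℂ] ℂ) (m : ℕ) (hm : m ≠ 0)
    (h : ∀ x y, P x y ≠ 0 → (β x y) ^ m = (P x y) ^ m)
    (hP : ∀ x, x ≠ 0 → ∃ y, P x y = 1) (x₀ : X) (y₀ : Y) (h0 : P x₀ y₀ = 1) :
    (β x₀ y₀) ^ m = 1 ∧ ∀ x y, β x y = β x₀ y₀ * P x y := by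
  have hz : ∀ x y, P x y = 0 → β x y = 0 := by
    intro x y hxy
    by_cases hx : x = 0
    · simp [hx]
    obtain ⟨y', hy'⟩ := hP x hx
    by_contra hb
    have := h x (y' - (β x y' / β x y) • y) (by simp [hxy, hy'])
    simp [hxy, hy', hb, hm] at this
  refine ⟨by rw [h _ _ (by simp [h0]), h0, one_pow], ?_⟩
  intro x y
  have e1 := hz x₀ (y - P x₀ y • y₀) (by simp [h0])
  have e2 := hz (x - P x y₀ • x₀) y₀ (by simp [h0])
  have e3 := hz (x - (P x y + (1 - P x₀ y) * P x y₀) • x₀) (y + (1 - P x₀ y) • y₀) (by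
    simp [h0])
  simp only [map_sub, map_add, map_smul, LinearMap.sub_apply, LinearMap.smul_apply, smul_eq_mul]
    at e1 e2 e3
  linear_combination e3 - (1 - P x₀ y) * e2 + (P x y + (1 - P x₀ y) * P x y₀) * e1

theorem rank_smulRight_le (f : E →L[ℂ] ℂ) (x : E) :
    LinearMap.rank ((f.smulRight x : E →L[ℂ] E) : E →ₗ[ℂ] E) ≤ 1 := by
  have h : LinearMap.range ((f.smulRight x : E →L[ℂ] E) : E →ₗ[ℂ] E) ≤ Submodule.span ℂ {x} := by
    rintro _ ⟨y, rfl⟩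
    exact Submodule.smul_mem _ _ (Submodule.mem_span_singleton_self x)
  calc _ ≤ Module.rank ℂ (Submodule.span ℂ {x}) := Submodule.rank_mono h
    _ ≤ #({x} : Set E) := rank_span_le _
    _ = 1 := by simp

theorem rank_two_le (f g : E →L[ℂ] ℂ) (x y : E) :
    LinearMap.rank ((f.smulRight x + g.smulRight y : E →L[ℂ] E) : E →ₗ[ℂ] E) ≤ 3 := by
  calc LinearMap.rank ((f.smulRight x + g.smulRight y : E →L[ℂ] E) : E →ₗ[ℂ] E)
      ≤ LinearMap.rank ((f.smulRight x : E →L[ℂ] E) : E →ₗ[ℂ] E)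
        + LinearMap.rank ((g.smulRight y : E →L[ℂ] E) : E →ₗ[ℂ] E) := by
        rw [ContinuousLinearMap.toLinearMap_add]; exact LinearMap.rank_add_le _ _
    _ ≤ 1 + 1 := add_le_add (rank_smulRight_le f x) (rank_smulRight_le g y)
    _ ≤ 3 := by norm_cast
theorem phi_zero (A : Subalgebra ℂ (E →L[ℂ] E)) (φ : A → A) (r s : ℕ)
    (hR : ∀ (f : E →L[ℂ] ℂ) x (g : E →L[ℂ] ℂ) y, ∃ a : A,
      (φ a : E →L[ℂ] E) = f.smulRight x + g.smulRight y)
    (H : ∀ b : A, φ b ^ r * φ 0 * φ b ^ s + φ b ^ s * φ 0 * φ b ^ r = 0) :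
    (φ 0 : E →L[ℂ] E) = 0 := by
  have key : ∀ (f : E →L[ℂ] ℂ) (x : E), f x = 1 → f ((φ 0 : E →L[ℂ] E) x) = 0 := by
    intro f x hfx
    obtain ⟨c, hc⟩ := hR f x 0 0
    have hP : ∀ v, (φ c : E →L[ℂ] E) v = f v • x := by intro v; rw [hc]; simp
    have h1 : ∀ n : ℕ, ((φ c : E →L[ℂ] E) ^ n) x = x := by
      intro n
      induction n with
      | zero => simp
      | succ n ih =>
        rw [pow_succ, mul_apply_eq_comp, hP, hfx, one_smul, ih]
    have h2 : ∀ (n : ℕ) v, f (((φ c : E →L[ℂ] E) ^ n) v) = f v := by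
      intro n
      induction n with
      | zero => simp
      | succ n ih =>
        intro v
        rw [pow_succ, mul_apply_eq_comp, ih, hP]
        simp [hfx]
    have h3 := congrArg (fun T : A => f ((T : E →L[ℂ] E) x)) (H c)
    simp only [Subalgebra.coe_add, Subalgebra.coe_mul, Subalgebra.coe_pow, add_apply,
      mul_apply_eq_comp, h1, map_add, h2, Subalgebra.coe_zero, zero_apply, map_zero] at h3
    linear_combination h3 / 2
  ext x
  by_cases hx : x = 0
  · simp [hx]
  obtain ⟨f, hf⟩ := SeparatingDual.exists_eq_one (R := ℂ) hx
  by_contra hN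
  obtain ⟨g, hg⟩ := SeparatingDual.exists_eq_one (R := ℂ) hN
  have e1 := key f x hf
  have e2 := key (g + (1 - g x) • f) x (by simp [hf])
  simp [e1] at e2
  rw [e2] at hg
  exact zero_ne_one hg

theorem core [CompleteSpace E] [Nontrivial E] (A : Subalgebra ℂ (E →L[ℂ] E))
    (hA : ∀ (f : E →L[ℂ] ℂ) (x : E), f.smulRight x ∈ A) (φ : A → A) (r s : ℕ) (hsr : s ≤ r)
    (hr : 1 ≤ r)
    (hR : ∀ (f : E →L[ℂ] ℂ) x (g : E →L[ℂ] ℂ) y, ∃ a : A,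
      (φ a : E →L[ℂ] E) = f.smulRight x + g.smulRight y)
    (H : ∀ a b : A, (a = 0 ∨ ∃ (f : E →L[ℂ] ℂ) (x : E), (b : E →L[ℂ] E) = f.smulRight x) →
      ∃ θ : A → A, IsJordanAutomorphism θ ∧
        φ b ^ r * φ a * φ b ^ s + φ b ^ s * φ a * φ b ^ r =
          θ (b ^ r * a * b ^ s + b ^ s * a * b ^ r)) :
    ∃ ξ : ℂ, ξ ^ (r + s + 1) = 1 ∧
      ((∃ S : E ≃L[ℂ] E, ∀ a : A,
          (φ a : E →L[ℂ] E) =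
            ξ • ((S : E →L[ℂ] E) ∘L (a : E →L[ℂ] E) ∘L (S.symm : E →L[ℂ] E))) ∨
       (∃ S : (E →L[ℂ] ℂ) ≃L[ℂ] E, ∀ a : A,
          (φ a : E →L[ℂ] E) =
            ξ • ((S : (E →L[ℂ] ℂ) →L[ℂ] E) ∘L dualOp (a : E →L[ℂ] E) ∘L
              (S.symm : E →L[ℂ] (E →L[ℂ] ℂ))))) := by
  have hφ0 : (φ 0 : E →L[ℂ] E) = 0 := by
    apply phi_zero A φ r s hR
    intro b
    obtain ⟨θ, hθ, h⟩ := H 0 b (Or.inl rfl)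
    rw [h]
    simpa using hθ.2.1.map_zero
  obtain ⟨M, hM⟩ := key_all A φ (r + s + 1) hR (fun f x hfx =>
    key_idem A hA φ r s hsr hr hR (fun a b hb => H a b (Or.inr hb)) f x hfx)
  obtain ⟨x₀, hx₀⟩ := exists_ne (0 : E)
  obtain ⟨f₀, hf₀⟩ := SeparatingDual.exists_eq_one (R := ℂ) hx₀
  have hf₀0 : f₀ ≠ 0 := by rintro rfl; simp at hf₀
  have hex : ∀ f : E →L[ℂ] ℂ, f ≠ 0 → ∃ y, f y = 1 := by
    intro f hf
    obtain ⟨y, hy⟩ : ∃ y, f y ≠ 0 := by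
      by_contra hcon
      push Not at hcon
      exact hf (by ext y; simp [hcon])
    exact ⟨(f y)⁻¹ • y, by simp [hy]⟩
  have h1 : ∀ x f, ∃ (k : E →L[ℂ] ℂ) (u : E), M x f = k.smulRight u := by
    intro x f
    obtain ⟨k, u, h, -⟩ := hM x f
    exact ⟨k, u, h⟩
  have h2 : ∀ (x : E) (f : E →L[ℂ] ℂ) (x' : E) (f' : E →L[ℂ] ℂ) (c : ℂ), x ≠ 0 → f ≠ 0 →
      M x f = c • M x' f' → (∃ d : ℂ, x = d • x') ∧ (∃ d : ℂ, f = d • f') := by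
    intro x f x' f' c hx hf h
    obtain ⟨k, u, e, ea, -⟩ := hM x f
    obtain ⟨k', u', e', ea', -⟩ := hM x' f'
    have hpt : ∀ (g : E →L[ℂ] ℂ) y, g x * f y = c * (g x' * f' y) := by
      intro g y
      have q1 := ea ⟨g.smulRight y, hA g y⟩
      have q2 := ea' ⟨g.smulRight y, hA g y⟩
      have q3 := trace_eq' (φ ⟨g.smulRight y, hA g y⟩ : E →L[ℂ] E) k (c • k') u u' (by
        rw [← e, h, e']; ext; simp [smul_smul])
      simp only [smul_apply, q1, q2] at q3
      simpa using q3
    obtain ⟨y, hy⟩ := hex f hf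
    obtain ⟨g, hg⟩ := SeparatingDual.exists_eq_one (R := ℂ) hx
    constructor
    · refine ⟨c * f' y, ?_⟩
      by_contra hne
      obtain ⟨g', hg'⟩ := SeparatingDual.exists_eq_one (R := ℂ) (sub_ne_zero.2 hne)
      have := hpt g' y
      rw [hy] at this
      simp only [map_sub, map_smul, smul_eq_mul] at hg'
      exact zero_ne_one (by linear_combination hg' - this)
    · refine ⟨c * g x', ?_⟩
      ext v
      have := hpt g v
      rw [hg] at this
      simp only [smul_apply, smul_eq_mul]
      linear_combination this
  have h3 : ∀ (g : E →L[ℂ] ℂ) (z : E), g ≠ 0 → z ≠ 0 → ∃ x f, g (M x f z) ≠ 0 := by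
    intro g z hg hz
    obtain ⟨c, hc⟩ := hR g z 0 0
    have hc0 : (c : E →L[ℂ] E) ≠ 0 := by
      intro h
      have : c = 0 := Subtype.ext h
      rw [this, hφ0] at hc
      obtain ⟨y, hy⟩ := hex g hg
      have := congrArg (fun T : E →L[ℂ] E => T y) hc
      simp [hy] at this
      exact hz this.symm
    obtain ⟨x, hx⟩ : ∃ x, (c : E →L[ℂ] E) x ≠ 0 := by
      by_contra hcon
      push Not at hcon
      exact hc0 (by ext y; simp [hcon])
    obtain ⟨f, hf⟩ := SeparatingDual.exists_eq_one (R := ℂ) hx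
    refine ⟨x, f, ?_⟩
    obtain ⟨k, u, e, ea, -⟩ := hM x f
    have q := ea c
    rw [hf, hc] at q
    rw [e]
    simp only [add_apply, smulRight_apply, zero_apply, zero_smul, add_zero, map_smul,
      smul_eq_mul] at q ⊢
    rw [mul_comm, q]
    exact one_ne_zero
  let P : E →ₗ[ℂ] (E →L[ℂ] ℂ) →ₗ[ℂ] ℂ :=
    LinearMap.mk₂ ℂ (fun x f => f x) (by simp) (by simp) (by simp) (by simp)
  have hPd : ∀ x f, P x f = f x := fun _ _ => rfl
  have hP : ∀ x, x ≠ 0 → ∃ f, P x f = 1 := fun x hx =>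
    SeparatingDual.exists_eq_one (R := ℂ) hx
  rcases classify M h1 h2 h3 x₀ f₀ hx₀ hf₀0 with ⟨U, V, hUV⟩ | ⟨U, V, hUV⟩
  · let β : E →ₗ[ℂ] (E →L[ℂ] ℂ) →ₗ[ℂ] ℂ :=
      LinearMap.mk₂ ℂ (fun x f => V f (U x)) (by simp) (by simp) (by simp) (by simp)
    have hβd : ∀ x f, β x f = V f (U x) := fun _ _ => rfl
    obtain ⟨hζ, hβ⟩ := beta_aux P β (r + s + 1) (by omega) (by
      intro x f hxf
      obtain ⟨k, u, e, -, hm⟩ := hM x f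
      rw [hPd] at hxf ⊢
      rw [hβd, ← hm hxf]
      have := trace_eq' 1 (V f) k (U x) u (by rw [← hUV, e])
      simp only [one_apply_eq_self] at this
      rw [this]) hP x₀ f₀ hf₀
    set ζ := β x₀ f₀
    have hζ0 : ζ ≠ 0 := by rintro h; simp [h] at hζ
    refine ⟨ζ⁻¹, by rw [inv_pow, hζ, inv_one], Or.inl ?_⟩
    obtain ⟨S, hS⟩ := close_aux (ContinuousLinearMap.id ℂ (E →L[ℂ] ℂ)) ζ hζ0 (by
      intro x c hc h
      exact NormedSpace.norm_le_dual_bound ℂ x hc h) U V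
      (fun f x => hβ x f)
      (by
        intro y hy
        by_contra hne
        obtain ⟨x, f, hxf⟩ := h3 f₀ y hf₀0 hne
        rw [hUV] at hxf
        simp [hy] at hxf)
      (by
        intro g hg
        by_contra hne
        obtain ⟨x, f, hxf⟩ := h3 g x₀ hne hx₀
        rw [hUV] at hxf
        simp [hg] at hxf)
    refine ⟨S, fun a => hS _ _ ?_⟩
    intro f x
    obtain ⟨k, u, e, ea, -⟩ := hM x f
    rw [trace_eq' _ (V f) k (U x) u (by rw [← hUV, e]), ea]
    rfl
  · let β : E →ₗ[ℂ] (E →L[ℂ] ℂ) →ₗ[ℂ] ℂ :=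
      LinearMap.mk₂ ℂ (fun x f => V x (U f)) (by simp) (by simp) (by simp) (by simp)
    have hβd : ∀ x f, β x f = V x (U f) := fun _ _ => rfl
    obtain ⟨hζ, hβ⟩ := beta_aux P β (r + s + 1) (by omega) (by
      intro x f hxf
      obtain ⟨k, u, e, -, hm⟩ := hM x f
      rw [hPd] at hxf ⊢
      rw [hβd, ← hm hxf]
      have := trace_eq' 1 (V x) k (U f) u (by rw [← hUV, e])
      simp only [one_apply_eq_self] at this
      rw [this]) hP x₀ f₀ hf₀
    set ζ := β x₀ f₀
    have hζ0 : ζ ≠ 0 := by rintro h; simp [h] at hζ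
    refine ⟨ζ⁻¹, by rw [inv_pow, hζ, inv_one], Or.inr ?_⟩
    obtain ⟨S, hS⟩ := close_aux ((ContinuousLinearMap.id ℂ (E →L[ℂ] ℂ)).flip) ζ hζ0 (by
      intro f c hc h
      exact f.opNorm_le_bound hc h) U V
      (fun x f => hβ x f)
      (by
        intro y hy
        by_contra hne
        obtain ⟨x, f, hxf⟩ := h3 f₀ y hf₀0 hne
        rw [hUV] at hxf
        simp [hy] at hxf)
      (by
        intro g hg
        by_contra hne
        obtain ⟨x, f, hxf⟩ := h3 g x₀ hne hx₀
        rw [hUV] at hxf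
        simp [hg] at hxf)
    refine ⟨S, fun a => hS _ _ ?_⟩
    intro x f
    obtain ⟨k, u, e, ea, -⟩ := hM x f
    rw [trace_eq' _ (V x) k (U f) u (by rw [← hUV, e]), ea]
    rfl

end aux

theorem stmt6 {E : Type*} [NormedAddCommGroup E] [NormedSpace ℂ E] [CompleteSpace E]
    (A : Subalgebra ℂ (E →L[ℂ] E))
    -- `A` is a standard operator algebra: it contains every bounded finite-rank operator
    (hA : ∀ T : E →L[ℂ] E, LinearMap.rank (T : E →ₗ[ℂ] E) < ℵ₀ → T ∈ A)
    -- data of the generalized Jordan product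
    -- `T_1 ∘ ⋯ ∘ T_k = T_{i 0} ⋯ T_{i (m-1)} + T_{i (m-1)} ⋯ T_{i 0}`
    (m k : ℕ) (hk : 2 ≤ k) (i : Fin m → Fin k)
    (hionto : Function.Surjective i)
    (hp : ∃ p : Fin m, ∀ q : Fin m, q ≠ p → i q ≠ i p)
    (φ : A → A)
    -- the range of `φ` contains all bounded operators of rank at most three
    (hrange : ∀ T : E →L[ℂ] E, LinearMap.rank (T : E →ₗ[ℂ] E) ≤ 3 →
      ∃ a : A, (φ a : E →L[ℂ] E) = T)
    -- operational local Jordan automorphism condition for the generalized Jordan product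
    (hφ : ∀ a : Fin k → A,
      (∃ j : Fin k, LinearMap.rank ((a j : E →L[ℂ] E) : E →ₗ[ℂ] E) ≤ 1) →
      ∃ θ : A → A, IsJordanAutomorphism θ ∧
        (List.ofFn fun j => φ (a (i j))).prod + (List.ofFn fun j => φ (a (i j))).reverse.prod =
          θ ((List.ofFn fun j => a (i j)).prod + (List.ofFn fun j => a (i j)).reverse.prod)) :
    ∃ ξ : ℂ, ξ ^ m = 1 ∧
      ((∃ S : E ≃L[ℂ] E, ∀ a : A,
          (φ a : E →L[ℂ] E) =
            ξ • ((S : E →L[ℂ] E) ∘L (a : E →L[ℂ] E) ∘L (S.symm : E →L[ℂ] E))) ∨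
       (∃ S : (E →L[ℂ] ℂ) ≃L[ℂ] E, ∀ a : A,
          (φ a : E →L[ℂ] E) =
            ξ • ((S : (E →L[ℂ] ℂ) →L[ℂ] E) ∘L dualOp (a : E →L[ℂ] E) ∘L
              (S.symm : E →L[ℂ] (E →L[ℂ] ℂ))))) := by
  rcases subsingleton_or_nontrivial E with hE | hE
  · refine ⟨1, one_pow _, Or.inl ⟨ContinuousLinearEquiv.refl ℂ E, fun a => ?_⟩⟩
    ext x
    exact Subsingleton.elim _ _
  obtain ⟨p, hp⟩ := hp
  have hA1 : ∀ (f : E →L[ℂ] ℂ) (x : E), f.smulRight x ∈ A := fun f x =>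
    hA _ ((rank_smulRight_le f x).trans_lt Cardinal.one_lt_aleph0)
  have hR : ∀ (f : E →L[ℂ] ℂ) x (g : E →L[ℂ] ℂ) y, ∃ a : A,
      (φ a : E →L[ℂ] E) = f.smulRight x + g.smulRight y := fun f x g y =>
    hrange _ (rank_two_le f g x y)
  have hmk : k ≤ m := by simpa using Fintype.card_le_of_surjective i hionto
  have hpm := p.2
  have H : ∀ a b : A, (a = 0 ∨ ∃ (f : E →L[ℂ] ℂ) (x : E), (b : E →L[ℂ] E) = f.smulRight x) →
      ∃ θ : A → A, IsJordanAutomorphism θ ∧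
        φ b ^ (p : ℕ) * φ a * φ b ^ (m - 1 - p) + φ b ^ (m - 1 - p) * φ a * φ b ^ (p : ℕ) =
          θ (b ^ (p : ℕ) * a * b ^ (m - 1 - p) + b ^ (m - 1 - p) * a * b ^ (p : ℕ)) := by
    intro a b hab
    obtain ⟨θ, hθ, h⟩ := hφ (fun j => if j = i p then a else b) (by
      rcases hab with rfl | ⟨f, x, hb⟩
      · refine ⟨i p, ?_⟩
        simp [LinearMap.rank_zero]
      · haveI : Nontrivial (Fin k) := Fin.nontrivial_iff_two_le.2 hk
        obtain ⟨j, hj⟩ := exists_ne (i p)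
        refine ⟨j, ?_⟩
        simp only [if_neg hj]
        rw [hb]
        exact rank_smulRight_le f x)
    refine ⟨θ, hθ, ?_⟩
    simp only [apply_ite φ] at h
    rw [list_prod_aux1 i p hp, list_prod_aux2 i p hp, list_prod_aux1 i p hp,
      list_prod_aux2 i p hp] at h
    exact h
  rcases le_total (m - 1 - p) (p : ℕ) with hle | hle
  · have := core A hA1 φ p (m - 1 - p) hle (by omega) hR H
    rwa [show (p : ℕ) + (m - 1 - p) + 1 = m by omega] at this
  · have := core A hA1 φ (m - 1 - p) p hle (by omega) hR (fun a b hab => by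
      obtain ⟨θ, hθ, h⟩ := H a b hab
      refine ⟨θ, hθ, ?_⟩
      rw [add_comm, h, add_comm])
    rwa [show (m - 1 - p) + (p : ℕ) + 1 = m by omega] at this
end

section
/- Let H be a complex Hilbert space and let φ : B(H) → B(H) be a (not necessarily linear, additive or continuous) map whose range contains all operators in B(H) of rank at most two. Suppose for any a, b ∈ B(H) there is a *-automorphism θ_{a,b} of B(H) with φ(a)*φ(b) = θ_{a,b}(a*b). Then there exist unitary operators U, V on H such that either φ(a) = UaV for all a ∈ B(H), or there is a conjugate-linear isometric involution J on H such that φ(a) = U(Ja*J)V for all a ∈ B(H). -/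
set_option synthInstance.maxHeartbeats 1000000
set_option maxHeartbeats 1000000

open Cardinal

/-- A `*`-automorphism of a complex `*`-algebra: a bijective complex-linear multiplicative
map preserving the star operation. -/
def IsStarAutomorphism {A : Type*} [Ring A] [Algebra ℂ A] [Star A] (θ : A → A) : Prop :=
  Function.Bijective θ ∧ IsLinearMap ℂ θ ∧ (∀ a b : A, θ (a * b) = θ a * θ b) ∧
    ∀ a : A, θ (star a) = star (θ a)

/-- A conjugate-linear isometric involution of a complex Hilbert space. -/
def IsConjLinearIsometricInvolution {H : Type*} [NormedAddCommGroup H]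
    [InnerProductSpace ℂ H] (J : H → H) : Prop :=
  (∀ x y : H, J (x + y) = J x + J y) ∧
    (∀ (c : ℂ) (x : H), J (c • x) = (starRingEnd ℂ) c • J x) ∧
    (∀ x : H, ‖J x‖ = ‖x‖) ∧ ∀ x : H, J (J x) = x

open InnerProductSpace in
theorem r1_char {H : Type*} [NormedAddCommGroup H] [InnerProductSpace ℂ H] [CompleteSpace H]
    (T : H →L[ℂ] H) :
    (∃ x y : H, T = rankOne ℂ x y) ↔ ∀ S : H →L[ℂ] H, ∃ c : ℂ, T * S * T = c • T := by
  constructor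
  · rintro ⟨x, y, rfl⟩ S
    refine ⟨inner ℂ y (S x), ?_⟩
    ext z
    simp [smul_smul, mul_comm]
  · intro h
    by_cases hT : T = 0
    · exact ⟨0, 0, by simp [hT]⟩
    obtain ⟨x, hx⟩ : ∃ x, T x ≠ 0 := by
      by_contra! h0
      exact hT (by ext z; simp [h0])
    have hn : (inner ℂ (T x) (T x) : ℂ) ≠ 0 := inner_self_ne_zero.2 hx
    have key : ∀ y, ∃ c : ℂ, T y = c • T x := by
      intro y
      obtain ⟨c, hc⟩ := h (rankOne ℂ y (T x))
      have h1 := congrArg (fun A : H →L[ℂ] H => A x) hc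
      change T ((inner ℂ (T x) (T x) : ℂ) • y) = c • T x at h1
      rw [map_smul] at h1
      refine ⟨(inner ℂ (T x) (T x))⁻¹ * c, ?_⟩
      rw [mul_smul, ← h1, smul_smul, inv_mul_cancel₀ hn, one_smul]
    refine ⟨(inner ℂ (T x) (T x))⁻¹ • T x, ContinuousLinearMap.adjoint T (T x), ?_⟩
    ext y
    obtain ⟨c, hc⟩ := key y
    rw [rankOne_apply, ContinuousLinearMap.adjoint_inner_left, hc, inner_smul_right, smul_smul,
      mul_assoc, mul_inv_cancel₀ hn, mul_one]

open InnerProductSpace in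
theorem r1_star {H : Type*} [NormedAddCommGroup H] [InnerProductSpace ℂ H] [CompleteSpace H]
    (T : H →L[ℂ] H) :
    (∃ x y : H, star T * T = rankOne ℂ x y) ↔ (∃ x y : H, T = rankOne ℂ x y) := by
  constructor
  · rintro ⟨p, q, h⟩
    have hker : ∀ z, inner ℂ q z = (0 : ℂ) → T z = 0 := by
      intro z hz
      have h1 := congrArg (fun A : H →L[ℂ] H => inner ℂ z (A z)) h
      change inner ℂ z (ContinuousLinearMap.adjoint T (T z)) = inner ℂ z ((inner ℂ q z : ℂ) • p) at h1
      rw [ContinuousLinearMap.adjoint_inner_right, hz, zero_smul, inner_zero_right] at h1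
      exact inner_self_eq_zero.1 h1
    by_cases hq : q = 0
    · refine ⟨0, 0, ?_⟩
      ext z
      simp [hker z (by simp [hq])]
    have hn : (inner ℂ q q : ℂ) ≠ 0 := inner_self_ne_zero.2 hq
    refine ⟨(inner ℂ q q : ℂ)⁻¹ • T q, q, ?_⟩
    ext z
    have h2 := hker (z - (inner ℂ q z * (inner ℂ q q)⁻¹ : ℂ) • q) (by
      rw [inner_sub_right, inner_smul_right, mul_assoc, inv_mul_cancel₀ hn, mul_one, sub_self])
    rw [map_sub, map_smul, sub_eq_zero] at h2
    rw [h2, rankOne_apply, smul_smul]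
  · rintro ⟨x, y, rfl⟩
    refine ⟨(inner ℂ x x : ℂ) • y, y, ?_⟩
    ext z
    simp [ContinuousLinearMap.star_eq_adjoint, smul_smul, mul_comm]

open InnerProductSpace in
theorem r1_auto {H : Type*} [NormedAddCommGroup H] [InnerProductSpace ℂ H] [CompleteSpace H]
    {θ : (H →L[ℂ] H) → (H →L[ℂ] H)} (hθ : IsStarAutomorphism θ) (T : H →L[ℂ] H) :
    (∃ x y : H, θ T = rankOne ℂ x y) ↔ (∃ x y : H, T = rankOne ℂ x y) := by
  obtain ⟨hb, hl, hm, -⟩ := hθ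
  rw [r1_char, r1_char]
  constructor
  · intro h S
    obtain ⟨c, hc⟩ := h (θ S)
    refine ⟨c, hb.1 ?_⟩
    rw [hm, hm, hc, hl.map_smul]
  · intro h S
    obtain ⟨S, rfl⟩ := hb.2 S
    obtain ⟨c, hc⟩ := h S
    exact ⟨c, by rw [← hm, ← hm, hc, hl.map_smul]⟩

open InnerProductSpace in
theorem tr_auto {H : Type*} [NormedAddCommGroup H] [InnerProductSpace ℂ H] [CompleteSpace H]
    {θ : (H →L[ℂ] H) → (H →L[ℂ] H)} (hθ : IsStarAutomorphism θ) (p q r s : H)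
    (h : rankOne ℂ r s = θ (rankOne ℂ p q)) : (inner ℂ s r : ℂ) = inner ℂ q p := by
  obtain ⟨hb, hl, hm, -⟩ := hθ
  have h0 : θ 0 = 0 := by simpa using hl.map_smul 0 0
  have sq : ∀ x y : H, rankOne ℂ x y * rankOne ℂ x y = (inner ℂ y x : ℂ) • rankOne ℂ x y := by
    intro x y
    ext z
    simp [smul_smul, mul_comm]
  by_cases hz : rankOne ℂ p q = 0
  · have hz2 : rankOne ℂ r s = 0 := by rw [h, hz, h0]
    rw [rankOne_eq_zero] at hz hz2
    rcases hz with rfl | rfl <;> rcases hz2 with rfl | rfl <;> simp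
  · have hz2 : rankOne ℂ r s ≠ 0 := by
      intro h1
      exact hz (hb.1 (by rw [← h, h1, h0]))
    have h1 := congrArg θ (sq p q)
    rw [hm, hl.map_smul, ← h, sq] at h1
    exact smul_left_injective ℂ hz2 h1

theorem stmt13 {H : Type*} [NormedAddCommGroup H] [InnerProductSpace ℂ H]
    [CompleteSpace H]
    (φ : (H →L[ℂ] H) → (H →L[ℂ] H))
    -- the range of `φ` contains all operators of rank at most two
    (hrange : ∀ T : H →L[ℂ] H, LinearMap.rank (T : H →ₗ[ℂ] H) ≤ 2 → ∃ a, φ a = T)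
    -- operational 2-local `*`-automorphism condition
    (hφ : ∀ a b : H →L[ℂ] H, ∃ θ : (H →L[ℂ] H) → (H →L[ℂ] H),
      IsStarAutomorphism θ ∧ star (φ a) * φ b = θ (star a * b)) :
    ∃ U V : H →L[ℂ] H, U ∈ unitary (H →L[ℂ] H) ∧ V ∈ unitary (H →L[ℂ] H) ∧
      ((∀ a : H →L[ℂ] H, φ a = U * a * V) ∨
       (∃ J : H → H, IsConjLinearIsometricInvolution J ∧
         ∀ (a : H →L[ℂ] H) (x : H),
           φ a x = U (J (ContinuousLinearMap.adjoint a (J (V x)))))) := by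
  classical
  have hr1 : ∀ c, (∃ x y : H, φ c = InnerProductSpace.rankOne ℂ x y) ↔ (∃ x y : H, c = InnerProductSpace.rankOne ℂ x y) := by
    intro c
    obtain ⟨θ, hθ, h⟩ := hφ c c
    rw [← r1_star, h, r1_auto hθ, r1_star]
  have hfwd : ∀ x y : H, ∃ r s : H, φ (InnerProductSpace.rankOne ℂ x y) = InnerProductSpace.rankOne ℂ r s :=
    fun x y => (hr1 _).2 ⟨x, y, rfl⟩
  have hbwd : ∀ r s : H, ∃ x y : H, φ (InnerProductSpace.rankOne ℂ x y) = InnerProductSpace.rankOne ℂ r s := by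
    intro r s
    obtain ⟨c, hc⟩ := hrange (InnerProductSpace.rankOne ℂ r s) (by
      have h1 : LinearMap.rank ((InnerProductSpace.rankOne ℂ r s : H →L[ℂ] H) : H →ₗ[ℂ] H) ≤ 1 := by
        have hle : LinearMap.range ((InnerProductSpace.rankOne ℂ r s : H →L[ℂ] H) : H →ₗ[ℂ] H) ≤
            Submodule.span ℂ {r} := by
          rintro _ ⟨z, rfl⟩
          exact Submodule.mem_span_singleton.2 ⟨inner ℂ s z, rfl⟩
        exact (Submodule.rank_mono hle).trans ((rank_span_le _).trans (by simp))
      exact h1.trans (by exact_mod_cast (by norm_num : (1 : ℕ) ≤ 2)))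
    obtain ⟨x, y, rfl⟩ := (hr1 c).1 ⟨r, s, hc⟩
    exact ⟨x, y, hc⟩
  have sm : ∀ (x y : H) (a : H →L[ℂ] H), star (InnerProductSpace.rankOne ℂ x y) * a =
      InnerProductSpace.rankOne ℂ y (ContinuousLinearMap.adjoint a x) := by
    intro x y a
    ext z
    simp [ContinuousLinearMap.star_eq_adjoint, ContinuousLinearMap.adjoint_inner_left]
  have P : ∀ (x y r s : H) (a : H →L[ℂ] H), φ (InnerProductSpace.rankOne ℂ x y) = InnerProductSpace.rankOne ℂ r s →
      (inner ℂ r (φ a s) : ℂ) = inner ℂ x (a y) := by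
    intro x y r s a h
    obtain ⟨θ, hθ, h1⟩ := hφ (InnerProductSpace.rankOne ℂ x y) a
    rw [h, sm, sm] at h1
    have := tr_auto hθ _ _ _ _ h1
    rwa [ContinuousLinearMap.adjoint_inner_left, ContinuousLinearMap.adjoint_inner_left] at this
  have hext : ∀ A B : H →L[ℂ] H,
      (∀ r s : H, (inner ℂ r (A s) : ℂ) = inner ℂ r (B s)) → A = B := by
    intro A B h
    ext s
    exact ext_inner_left ℂ fun r => h r s
  have hadd : ∀ a b, φ (a + b) = φ a + φ b := by
    intro a b
    apply hext
    intro r s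
    obtain ⟨x, y, h⟩ := hbwd r s
    rw [add_apply, inner_add_right, P _ _ _ _ _ h, P _ _ _ _ _ h,
      P _ _ _ _ _ h, add_apply, inner_add_right]
  have hsmul : ∀ (c : ℂ) a, φ (c • a) = c • φ a := by
    intro c a
    apply hext
    intro r s
    obtain ⟨x, y, h⟩ := hbwd r s
    rw [smul_apply, inner_smul_right, P _ _ _ _ _ h, P _ _ _ _ _ h,
      smul_apply, inner_smul_right]
  have hzero : φ 0 = 0 := by simpa using hsmul 0 0
  have hinj : ∀ a, φ a = 0 → a = 0 := by
    intro a ha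
    apply hext
    intro x y
    obtain ⟨r, s, h⟩ := hfwd x y
    rw [← P x y r s a h, ha]
    simp
  have hne : ∀ x y : H, InnerProductSpace.rankOne ℂ x y ≠ 0 ↔ (x ≠ 0 ∧ y ≠ 0) := by
    intro x y
    rw [Ne, InnerProductSpace.rankOne_eq_zero]
    tauto
  have hnz : ∀ x y r s : H, φ (InnerProductSpace.rankOne ℂ x y) = InnerProductSpace.rankOne ℂ r s →
      ((x ≠ 0 ∧ y ≠ 0) ↔ (r ≠ 0 ∧ s ≠ 0)) := by
    intro x y r s h
    rw [← hne, ← hne, not_iff_not, ← h]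
    exact ⟨fun h => by rw [h, hzero], hinj _⟩
  have orth : ∀ x y u v r s r2 s2 : H, φ (InnerProductSpace.rankOne ℂ x y) = InnerProductSpace.rankOne ℂ r s →
      φ (InnerProductSpace.rankOne ℂ u v) = InnerProductSpace.rankOne ℂ r2 s2 → x ≠ 0 → y ≠ 0 → u ≠ 0 → v ≠ 0 →
      ((inner ℂ x u : ℂ) = 0 ↔ (inner ℂ r r2 : ℂ) = 0) := by
    intro x y u v r s r2 s2 h h2 hx hy hu hv
    obtain ⟨hr, hs⟩ := (hnz _ _ _ _ h).1 ⟨hx, hy⟩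
    obtain ⟨hr2, hs2⟩ := (hnz _ _ _ _ h2).1 ⟨hu, hv⟩
    have pr : ∀ x y u v : H, x ≠ 0 → y ≠ 0 → u ≠ 0 → v ≠ 0 →
        ((inner ℂ x u : ℂ) = 0 ↔ star (InnerProductSpace.rankOne ℂ x y) * InnerProductSpace.rankOne ℂ u v = 0) := by
      intro x y u v hx hy hu hv
      rw [sm, InnerProductSpace.rankOne_eq_zero, InnerProductSpace.adjoint_rankOne, InnerProductSpace.rankOne_apply, smul_eq_zero, inner_eq_zero_symm]
      tauto
    obtain ⟨θ, ⟨hb, hl, -⟩, h1⟩ := hφ (InnerProductSpace.rankOne ℂ x y) (InnerProductSpace.rankOne ℂ u v)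
    rw [pr x y u v hx hy hu hv, pr r s r2 s2 hr hs hr2 hs2, ← h, ← h2, h1]
    have h0 : θ 0 = 0 := by simpa using hl.map_smul 0 0
    exact ⟨fun h => by rw [h, h0], fun h => hb.1 (by rw [h, h0])⟩
  have comp : ∀ f r : H, ‖f‖ = 1 → (∀ w : H, (inner ℂ w f : ℂ) = 0 → (inner ℂ w r : ℂ) = 0) →
      r = (inner ℂ f r : ℂ) • f := by
    intro f r hf h
    have h1 : (inner ℂ f f : ℂ) = 1 := by simp [inner_self_eq_norm_sq_to_K, hf]
    have h2 : (inner ℂ (r - (inner ℂ f r : ℂ) • f) f : ℂ) = 0 := by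
      rw [inner_sub_left, inner_smul_left, h1, inner_conj_symm, mul_one, sub_self]
    have h3 := h _ h2
    have h4 : (inner ℂ (r - (inner ℂ f r : ℂ) • f) (r - (inner ℂ f r : ℂ) • f) : ℂ) = 0 := by
      rw [inner_sub_right, h3, inner_smul_right, h2]; simp
    exact sub_eq_zero.1 (inner_self_eq_zero.1 h4)
  -- operators with a common range go to operators with a common range
  have rowx : ∀ x : H, x ≠ 0 → ∃ f : H, ‖f‖ = 1 ∧ ∀ y, ∃ s, φ (InnerProductSpace.rankOne ℂ x y) = InnerProductSpace.rankOne ℂ f s := by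
    intro x hx
    obtain ⟨r, s, h⟩ := hfwd x x
    obtain ⟨hr, hs⟩ := (hnz _ _ _ _ h).1 ⟨hx, hx⟩
    have hrn : (‖r‖ : ℂ) ≠ 0 := by exact_mod_cast norm_ne_zero_iff.2 hr
    have hf : ‖(‖r‖ : ℂ)⁻¹ • r‖ = 1 := by
      rw [norm_smul, norm_inv, Complex.norm_real, norm_norm, inv_mul_cancel₀ (norm_ne_zero_iff.2 hr)]
    refine ⟨(‖r‖ : ℂ)⁻¹ • r, hf, fun y => ?_⟩
    by_cases hy : y = 0
    · exact ⟨0, by simp [hy, hzero]⟩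
    obtain ⟨r2, s2, h2⟩ := hfwd x y
    have := comp _ r2 hf (by
      intro w hw
      by_cases hw0 : w = 0
      · simp [hw0]
      rw [inner_smul_right, mul_eq_zero, or_iff_right (inv_ne_zero hrn)] at hw
      obtain ⟨u, v, huv⟩ := hbwd w s
      obtain ⟨hu, hv⟩ := (hnz _ _ _ _ huv).2 ⟨hw0, hs⟩
      rw [← orth u v x y w s r2 s2 huv h2 hu hv hx hy]
      rwa [orth u v x x w s r s huv h hu hv hx hx])
    generalize (inner ℂ ((‖r‖ : ℂ)⁻¹ • r) r2 : ℂ) = c at this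
    refine ⟨(starRingEnd ℂ) c • s2, ?_⟩
    rw [h2, this]
    simp [smul_comm c]
  -- trivial space
  by_cases hH : ∀ x : H, x = 0
  · refine ⟨1, 1, one_mem _, one_mem _, Or.inl fun a => ?_⟩
    ext x
    rw [hH (φ a x), hH ((1 * a * 1 : H →L[ℂ] H) x)]
  obtain ⟨e, he⟩ : ∃ e : H, ‖e‖ = 1 := by
    push Not at hH
    obtain ⟨x, hx⟩ := hH
    refine ⟨(‖x‖ : ℂ)⁻¹ • x, ?_⟩
    rw [norm_smul, norm_inv, Complex.norm_real, norm_norm, inv_mul_cancel₀ (norm_ne_zero_iff.2 hx)]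
  have he0 : e ≠ 0 := by rintro rfl; simp at he
  have hee : (inner ℂ e e : ℂ) = 1 := by simp [inner_self_eq_norm_sq_to_K, he]
  obtain ⟨f, hf, hV0⟩ := rowx e he0
  have hff : (inner ℂ f f : ℂ) = 1 := by simp [inner_self_eq_norm_sq_to_K, hf]
  have hf0 : f ≠ 0 := by rintro rfl; simp at hf
  obtain ⟨V, hVd⟩ : ∃ V : H →ₗ[ℂ] H,
      ∀ y, V y = ContinuousLinearMap.adjoint (φ (InnerProductSpace.rankOne ℂ e y)) f := ⟨
    { toFun := fun y => ContinuousLinearMap.adjoint (φ (InnerProductSpace.rankOne ℂ e y)) f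
      map_add' := by intro x y; simp [hadd]
      map_smul' := by
        intro c y
        rw [map_smulₛₗ, hsmul, map_smulₛₗ]
        simp }, fun _ => rfl⟩
  have hV : ∀ y, φ (InnerProductSpace.rankOne ℂ e y) = InnerProductSpace.rankOne ℂ f (V y) := by
    intro y
    obtain ⟨s, hs⟩ := hV0 y
    have : V y = s := by
      rw [hVd, hs, InnerProductSpace.adjoint_rankOne, InnerProductSpace.rankOne_apply, hff, one_smul]
    rw [hs, this]
  have hVi : ∀ y z, (inner ℂ (V y) (V z) : ℂ) = inner ℂ y z := by
    intro y z
    have := P e z f (V z) (InnerProductSpace.rankOne ℂ e y) (hV z)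
    rwa [hV, InnerProductSpace.rankOne_apply, InnerProductSpace.rankOne_apply, inner_smul_right, inner_smul_right, hff, hee, mul_one,
      mul_one] at this
  have hVs : Function.Surjective V := by
    intro w
    by_cases hw : w = 0
    · exact ⟨0, by simp [hw]⟩
    obtain ⟨u, v, h⟩ := hbwd f w
    obtain ⟨hu, hv⟩ := (hnz _ _ _ _ h).2 ⟨hf0, hw⟩
    have := comp e u he (by
      intro z hz
      by_cases hz0 : z = 0
      · simp [hz0]
      obtain ⟨r, s, hrs⟩ := hfwd z e
      rw [orth z e u v r s f w hrs h hz0 he0 hu hv]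
      rwa [orth z e e e r s f (V e) hrs (hV e) hz0 he0 he0 he0] at hz)
    generalize (inner ℂ e u : ℂ) = c at this
    refine ⟨(starRingEnd ℂ) c • v, ?_⟩
    have h2 : φ (InnerProductSpace.rankOne ℂ e ((starRingEnd ℂ) c • v)) = InnerProductSpace.rankOne ℂ f w := by
      rw [← h, this]
      simp
    rw [hVd, h2, InnerProductSpace.adjoint_rankOne, InnerProductSpace.rankOne_apply, hff, one_smul]
  have hU1 : ∀ x : H, (inner ℂ e x : ℂ) ≠ 0 → ∃ r, ∀ y, φ (InnerProductSpace.rankOne ℂ x y) = InnerProductSpace.rankOne ℂ r (V y) := by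
    intro x hx
    have hx0 : x ≠ 0 := by rintro rfl; simp at hx
    obtain ⟨g, hg, hW⟩ := rowx x hx0
    choose W hW using hW
    have key : ∀ y v, (inner ℂ f g : ℂ) * inner ℂ (W y) (V v) = inner ℂ e x * inner ℂ y v := by
      intro y v
      have := P e v f (V v) (InnerProductSpace.rankOne ℂ x y) (hV v)
      rwa [hW, InnerProductSpace.rankOne_apply, InnerProductSpace.rankOne_apply, inner_smul_right, inner_smul_right, mul_comm,
        mul_comm (inner ℂ y v)] at this
    have hfg : (inner ℂ f g : ℂ) ≠ 0 := by
      intro h0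
      have := key e e
      rw [h0, hee, zero_mul, mul_one] at this
      exact hx this.symm
    refine ⟨((inner ℂ e x : ℂ) / inner ℂ f g) • g, fun y => ?_⟩
    rw [hW]
    have : W y = (starRingEnd ℂ) ((inner ℂ e x : ℂ) / inner ℂ f g) • V y := by
      apply ext_inner_right ℂ
      intro w
      obtain ⟨v, rfl⟩ := hVs w
      rw [inner_smul_left, hVi, Complex.conj_conj, div_mul_eq_mul_div, ← key y v]
      field_simp
    rw [this]
    simp
  have hU2 : ∀ x : H, ∃ r, ∀ y, φ (InnerProductSpace.rankOne ℂ x y) = InnerProductSpace.rankOne ℂ r (V y) := by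
    intro x
    by_cases hx : (inner ℂ e x : ℂ) = 0
    · obtain ⟨r, hr⟩ := hU1 (x + e) (by rw [inner_add_right, hx, hee]; simp)
      refine ⟨r - f, fun y => ?_⟩
      have h1 : φ (InnerProductSpace.rankOne ℂ (x + e) y) = φ (InnerProductSpace.rankOne ℂ x y) + φ (InnerProductSpace.rankOne ℂ e y) := by
        rw [← hadd]; simp
      rw [hr, hV] at h1
      rw [← sub_eq_iff_eq_add] at h1
      rw [← h1]
      simp
    · exact hU1 x hx
  have hVe : (inner ℂ (V e) (V e) : ℂ) = 1 := by rw [hVi, hee]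
  obtain ⟨U, hUd⟩ : ∃ U : H →ₗ[ℂ] H,
      ∀ x, U x = φ (InnerProductSpace.rankOne ℂ x e) (V e) := ⟨
    { toFun := fun x => φ (InnerProductSpace.rankOne ℂ x e) (V e)
      map_add' := by intro x y; simp [hadd]
      map_smul' := by intro c y; simp [hsmul] }, fun _ => rfl⟩
  have hU : ∀ x y, φ (InnerProductSpace.rankOne ℂ x y) = InnerProductSpace.rankOne ℂ (U x) (V y) := by
    intro x y
    obtain ⟨r, hr⟩ := hU2 x
    have : U x = r := by
      rw [hUd, hr, InnerProductSpace.rankOne_apply, hVe, one_smul]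
    rw [this, hr]
  have hUi : ∀ x u, (inner ℂ (U x) (U u) : ℂ) = inner ℂ x u := by
    intro x u
    have := P x e _ _ (InnerProductSpace.rankOne ℂ u e) (hU x e)
    rwa [hU, InnerProductSpace.rankOne_apply, InnerProductSpace.rankOne_apply, hVe, hee, one_smul, one_smul] at this
  have hUs : Function.Surjective U := by
    intro w
    obtain ⟨x, y, h⟩ := hbwd w (V e)
    have h1 := congrArg (fun A : H →L[ℂ] H => A (V e)) h
    simp only [hU, InnerProductSpace.rankOne_apply, hVe, one_smul] at h1
    exact ⟨(inner ℂ (V y) (V e) : ℂ) • x, by rw [map_smul, h1]⟩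
  let Ue : H ≃ₗᵢ[ℂ] H := LinearIsometryEquiv.ofSurjective (U.isometryOfInner hUi) hUs
  let Ve : H ≃ₗᵢ[ℂ] H := LinearIsometryEquiv.ofSurjective (V.isometryOfInner hVi) hVs
  refine ⟨(Unitary.linearIsometryEquiv.symm Ue : unitary (H →L[ℂ] H)),
    (Unitary.linearIsometryEquiv.symm Ve.symm : unitary (H →L[ℂ] H)),
    SetLike.coe_mem _, SetLike.coe_mem _, Or.inl fun a => ?_⟩
  ext z
  obtain ⟨y, rfl⟩ : ∃ y, Ve y = z := Ve.surjective z
  have h1 : φ a (V y) = U (a y) := by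
    apply ext_inner_left ℂ
    intro w
    obtain ⟨x, rfl⟩ := hUs w
    rw [P x y _ _ a (hU x y), hUi]
  change φ a (V y) = U (a (Ve.symm (Ve y)))
  rw [Ve.symm_apply_apply, h1]
end

section
/- Let A be a unital simple C*-algebra with a faithful tracial state τ, and let φ : A → A be a (not necessarily linear, additive or continuous) map such that for any a, b ∈ A there is a linear derivation D_{a,b} : A → A with φ(a)b + aφ(b) = D_{a,b}(ab). Then φ is a linear derivation, i.e., φ is complex-linear and φ(ab) = φ(a)b + aφ(b) for all a, b ∈ A. -/
set_option synthInstance.maxHeartbeats 1000000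
set_option maxHeartbeats 1000000

open scoped ComplexOrder


theorem aux_jordan_alg {A : Type*} [Ring A] [Algebra ℂ A] (φ : A →ₗ[ℂ] A)
    (hJ : ∀ a, φ (a * a) = φ a * a + a * φ a) (hss : ∀ z : A, (∀ y, z * y * z = 0) → z = 0) :
    ∀ a b x c d : A, (φ (a * b) - φ a * b - a * φ b) * x * (c * d - d * c) = 0 := by
  have two : ∀ z : A, z + z = 0 → z = 0 := by
    intro z hz
    have : (2 : ℂ) • z = 0 := by rw [two_smul]; exact hz
    simpa using this
  have tw : ∀ z w : A, z + z = w + w → z = w := by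
    intro z w h
    have : z - w = 0 := two _ (by
      have : z - w + (z - w) = (z + z) - (w + w) := by abel
      rw [this, h, sub_self])
    exact sub_eq_zero.1 this
  have hJ2 : ∀ a b, φ (a * b) + φ (b * a) = φ a * b + a * φ b + φ b * a + b * φ a := by
    intro a b
    have h := hJ (a + b)
    have ha := hJ a
    have hb := hJ b
    simp only [mul_add, add_mul, map_add] at h
    rw [ha, hb] at h
    have h' : φ (a * b) + φ (b * a) = (φ a * a + a * φ a + φ (b * a) + (φ (a * b) + (φ b * b + b * φ b)))
      - (φ a * a + a * φ a) - (φ b * b + b * φ b) := by abel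
    rw [h', h]; abel
  have hT : ∀ a b, φ (a * b * a) = φ a * b * a + a * φ b * a + a * b * φ a := by
    intro a b
    have h1 := hJ2 a (a * b + b * a)
    have h2 := hJ2 (a * a) b
    have h3 := hJ2 a b
    have h4 := hJ a
    apply tw
    have e1 : φ (a * b * a) + φ (a * b * a) =
        (φ (a * (a * b + b * a)) + φ ((a * b + b * a) * a)) - (φ (a * a * b) + φ (b * (a * a))) := by
      simp only [← map_add, ← map_sub]; congr 1; noncomm_ring
    rw [e1, h1, h2, h4, map_add, h3]
    noncomm_ring
  have hT2 : ∀ a b c, φ (a * b * c) + φ (c * b * a) = φ a * b * c + a * φ b * c + a * b * φ c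
      + (φ c * b * a + c * φ b * a + c * b * φ a) := by
    intro a b c
    have e1 : φ (a * b * c) + φ (c * b * a) = φ ((a + c) * b * (a + c)) - φ (a * b * a) - φ (c * b * c) := by
      simp only [← map_add, ← map_sub]; congr 1; noncomm_ring
    rw [e1, hT, hT, hT, map_add]
    noncomm_ring
  set δ : A → A → A := fun a b => φ (a * b) - φ a * b - a * φ b with hδ
  have hanti : ∀ a b, δ b a = - δ a b := by
    intro a b
    have h := hJ2 a b
    have : δ b a + δ a b = 0 := by
      simp only [hδ]
      have : φ (b * a) - φ b * a - b * φ a + (φ (a * b) - φ a * b - a * φ b) =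
        (φ (a * b) + φ (b * a)) - φ b * a - b * φ a  - φ a * b - a * φ b := by abel
      rw [this, h]; abel
    exact eq_neg_of_add_eq_zero_left this
  have key : ∀ a b x, δ a b * x * (a * b - b * a) + (a * b - b * a) * x * δ a b = 0 := by
    intro a b x
    have h1 := hT2 (a * b) x (b * a)
    have h2 := hT a (b * x * b)
    have h3 := hT b (a * x * a)
    have h4 := hT b x
    have h5 := hT a x
    have e : φ (a * b * x * (b * a)) + φ (b * a * x * (a * b)) =
      φ (a * (b * x * b) * a) + φ (b * (a * x * a) * b) := by simp only [mul_assoc]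
    rw [h1, h2, h3, h4, h5] at e
    have hba : φ (b * a) = φ a * b + a * φ b + φ b * a + b * φ a - φ (a * b) :=
      eq_sub_of_add_eq (by rw [add_comm]; exact hJ2 a b)
    rw [hba] at e
    simp only [hδ]
    rw [← sub_eq_zero] at e
    rw [← neg_eq_zero, ← e]
    noncomm_ring
  have key2 : ∀ a b x, δ a b * x * (a * b - b * a) = 0 := by
    intro a b x
    set s := δ a b
    set k := a * b - b * a
    have K : ∀ x, k * x * s = - (s * x * k) := fun x => eq_neg_of_add_eq_zero_right (key a b x)
    apply hss
    intro y
    apply two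
    have e1 : s * x * k * y * (s * x * k) = k * x * s * y * (s * x * k) := by
      calc s * x * k * y * (s * x * k) = s * x * (k * y * s) * x * k := by noncomm_ring
        _ = - (s * (x * s * y) * k) * x * k := by rw [K]; noncomm_ring
        _ = (k * (x * s * y) * s) * x * k := by rw [← K]
        _ = _ := by noncomm_ring
    nth_rewrite 1 [e1]
    rw [K]; noncomm_ring
  have dadd : ∀ a a' b, δ (a + a') b = δ a b + δ a' b := by
    intro a a' b; simp only [hδ, add_mul, map_add]; abel
  have key3 : ∀ a b x c, δ a b * x * (c * b - b * c) = 0 := by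
    intro a b x c
    have L : ∀ x, δ c b * x * (a * b - b * a) = - (δ a b * x * (c * b - b * c)) := by
      intro x
      have h := key2 (a + c) b x
      rw [dadd] at h
      have h1 := key2 a b x
      have h2 := key2 c b x
      apply eq_neg_of_add_eq_zero_left
      rw [← h, ← sub_eq_zero]
      have : δ c b * x * (a * b - b * a) + δ a b * x * (c * b - b * c) -
        (δ a b + δ c b) * x * ((a + c) * b - b * (a + c)) =
        -(δ a b * x * (a * b - b * a)) - (δ c b * x * (c * b - b * c)) := by noncomm_ring
      rw [this, h1, h2]; simp
    apply hss
    intro y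
    have : δ a b * x * (c * b - b * c) * y * (δ a b * x * (c * b - b * c))
       = - (δ a b * (x * (c * b - b * c) * y * δ c b * x) * (a * b - b * a)) := by
      have e := L x
      have e' : δ a b * x * (c * b - b * c) = -(δ c b * x * (a * b - b * a)) := by rw [e, neg_neg]
      nth_rewrite 2 [e']
      noncomm_ring
    rw [this, key2, neg_zero]
  have dadd2 : ∀ a b b', δ a (b + b') = δ a b + δ a b' := by
    intro a a' b; simp only [hδ, mul_add, map_add]; abel
  intro a b x c d
  change δ a b * x * _ = 0
  have L : ∀ x, δ a d * x * (c * b - b * c) = - (δ a b * x * (c * d - d * c)) := by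
    intro x
    have h := key3 a (b + d) x c
    rw [dadd2] at h
    have h1 := key3 a b x c
    have h2 := key3 a d x c
    apply eq_neg_of_add_eq_zero_left
    rw [← h, ← sub_eq_zero]
    have : δ a d * x * (c * b - b * c) + δ a b * x * (c * d - d * c) -
      (δ a b + δ a d) * x * (c * (b + d) - (b + d) * c) =
      -(δ a b * x * (c * b - b * c)) - (δ a d * x * (c * d - d * c)) := by noncomm_ring
    rw [this, h1, h2]; simp
  apply hss
  intro y
  have : δ a b * x * (c * d - d * c) * y * (δ a b * x * (c * d - d * c))
      = - (δ a b * (x * (c * d - d * c) * y * δ a d * x) * (c * b - b * c)) := by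
    have e := L x
    have e' : δ a b * x * (c * d - d * c) = -(δ a d * x * (c * b - b * c)) := by rw [e, neg_neg]
    nth_rewrite 2 [e']
    noncomm_ring
  rw [this, key3, neg_zero]

section
open Filter Topology

theorem aux_dissip1 {A : Type*} [CStarAlgebra A] (D : A →ₗ[ℂ] A)
    (hD : ∀ x y, D (x * y) = D x * y + x * D y) (y : A) (hy : IsSelfAdjoint y)
    (hM : ‖y‖ ∈ spectrum ℝ y) (s : ℂ) : ‖y‖ ≤ ‖y + s • D y‖ := by
  have hA : Nontrivial A := by
    by_contra h
    rw [not_nontrivial_iff_subsingleton] at h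
    simp [spectrum.of_subsingleton] at hM
  set M := ‖y‖ with hMdef
  set k : A := cfc (fun t : ℝ => Real.sqrt (M - t)) y with hk
  have hle : ∀ t ∈ spectrum ℝ y, t ≤ M := fun t ht =>
    (le_abs_self t).trans (by simpa using spectrum.norm_le_norm_of_mem ht)
  have hkk : k * k = (M : ℂ) • (1 : A) - y := by
    rw [hk, ← cfc_mul _ _ y]
    have : (spectrum ℝ y).EqOn (fun t : ℝ => √(M - t) * √(M - t)) (fun t => M - t) := by
      intro t ht
      exact Real.mul_self_sqrt (sub_nonneg.2 (hle t ht))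
    rw [cfc_congr this, cfc_sub _ _ y, cfc_const M y, cfc_id' ℝ y]
    congr 1
    rw [Algebra.algebraMap_eq_smul_one]
    exact (Complex.coe_smul M (1 : A)).symm
  have hD1 : D 1 = 0 := by simpa using hD 1 1
  have hDy : D y = - (D k * k + k * D k) := by
    rw [← hD, hkk]; simp [hD1]
  have hyk : y = (M : ℂ) • (1 : A) - k * k := by rw [hkk]; abel
  refine le_of_forall_pos_le_add fun ε hε => ?_
  set C := ‖k‖ + 2 * ‖s‖ * ‖D k‖ with hC
  have hC0 : 0 ≤ C := by positivity
  obtain ⟨e, he, heC⟩ : ∃ e : ℝ, 0 < e ∧ e * C ≤ ε := 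
    ⟨ε / (C + 1), by positivity, by
      rw [div_mul_eq_mul_div, div_le_iff₀ (by positivity)]; nlinarith⟩
  set q : A := cfc (fun t : ℝ => max 0 (1 - √(M - t) / e)) y with hq
  have hcs : Continuous (fun t : ℝ => √(M - t)) :=
    Real.continuous_sqrt.comp (continuous_const.sub continuous_id)
  have hcq : Continuous (fun t : ℝ => max 0 (1 - √(M - t) / e)) :=
    continuous_const.max (continuous_const.sub (hcs.div_const e))
  have hqsa : IsSelfAdjoint q := cfc_predicate _ _
  have hf1 : ∀ t : ℝ, |max 0 (1 - √(M - t) / e)| ≤ 1 := by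
    intro t
    rw [abs_of_nonneg (le_max_left _ _)]
    apply max_le zero_le_one
    have : 0 ≤ √(M - t) / e := by positivity
    linarith
  have hq1 : ‖q‖ ≤ 1 := norm_cfc_le zero_le_one fun t _ => by
    rw [Real.norm_eq_abs]; exact hf1 t
  have hq1' : 1 ≤ ‖q‖ := by
    have := norm_apply_le_norm_cfc (fun t : ℝ => max 0 (1 - √(M - t) / e)) y hM
      hcq.continuousOn hy
    simpa using this
  have hqq : ‖q * q‖ = 1 := by
    have := CStarRing.norm_star_mul_self (x := q)
    rw [hqsa.star_eq] at this
    rw [this, le_antisymm hq1 hq1']; simp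
  have hb : ∀ t : ℝ, ‖√(M - t) * max 0 (1 - √(M - t) / e)‖ ≤ e := by
    intro t
    set r := √(M - t)
    have hr : 0 ≤ r := Real.sqrt_nonneg _
    rw [Real.norm_eq_abs, abs_of_nonneg (by positivity)]
    by_cases h : r ≤ e
    · calc r * max 0 (1 - r / e) ≤ r * 1 := by
            gcongr; exact (le_abs_self _).trans (hf1 t)
        _ ≤ e := by linarith
    · have : 1 ≤ r / e := by rw [le_div_iff₀ he]; linarith
      rw [max_eq_left (by linarith)]; simp [he.le]
  have hkq : ‖k * q‖ ≤ e := by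
    rw [hk, hq, ← cfc_mul _ _ y hcs.continuousOn hcq.continuousOn]
    exact norm_cfc_le he.le fun t _ => hb t
  have hqk : ‖q * k‖ ≤ e := by
    rw [hk, hq, ← cfc_mul _ _ y hcq.continuousOn hcs.continuousOn]
    exact norm_cfc_le he.le fun t _ => by rw [mul_comm]; exact hb t
  set w := y + s • D y with hw
  have hid : (M : ℂ) • (q * q) = q * w * q + ((q * k) * (k * q) + s • (q * D k * (k * q))
      + s • ((q * k) * (D k * q))) := by
    rw [hw, hDy]
    nth_rewrite 1 [hyk]
    simp only [mul_add, add_mul, mul_sub, sub_mul, mul_neg, neg_mul, smul_add, smul_neg,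
      mul_smul_comm, smul_mul_assoc, mul_one, mul_assoc]
    abel
  have hn : M = ‖(M : ℂ) • (q * q)‖ := by
    rw [norm_smul, hqq]; simp [hMdef]
  have b1 : ‖q * w * q‖ ≤ ‖w‖ := by
    calc ‖q * w * q‖ ≤ ‖q‖ * ‖w‖ * ‖q‖ := norm_mul₃_le
      _ ≤ 1 * ‖w‖ * 1 := by gcongr
      _ = _ := by ring
  have b2 : ‖(q * k) * (k * q)‖ ≤ e * ‖k‖ := by
    calc _ ≤ ‖q * k‖ * (‖k‖ * ‖q‖) := (norm_mul_le _ _).trans (by gcongr; exact norm_mul_le _ _)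
      _ ≤ e * (‖k‖ * 1) := by gcongr
      _ = _ := by ring
  have b3 : ‖s • (q * D k * (k * q))‖ ≤ ‖s‖ * (‖D k‖ * e) := by
    rw [norm_smul]
    gcongr
    calc _ ≤ (‖q‖ * ‖D k‖) * ‖k * q‖ := (norm_mul_le _ _).trans (by gcongr; exact norm_mul_le _ _)
      _ ≤ (1 * ‖D k‖) * e := by gcongr
      _ = _ := by ring
  have b4 : ‖s • ((q * k) * (D k * q))‖ ≤ ‖s‖ * (‖D k‖ * e) := by
    rw [norm_smul]
    gcongr
    calc _ ≤ ‖q * k‖ * (‖D k‖ * ‖q‖) := (norm_mul_le _ _).trans (by gcongr; exact norm_mul_le _ _)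
      _ ≤ e * (‖D k‖ * 1) := by gcongr
      _ = _ := by ring
  have b5 : M ≤ ‖w‖ + (e * ‖k‖ + ‖s‖ * (‖D k‖ * e) + ‖s‖ * (‖D k‖ * e)) := by
    rw [hn, hid]
    refine (norm_add_le _ _).trans (add_le_add b1 ?_)
    refine (norm_add_le _ _).trans (add_le_add ?_ b4)
    exact (norm_add_le _ _).trans (add_le_add b2 b3)
  have : e * ‖k‖ + ‖s‖ * (‖D k‖ * e) + ‖s‖ * (‖D k‖ * e) = e * C := by rw [hC]; ring
  linarith

theorem aux_dissip {A : Type*} [CStarAlgebra A] (D : A →ₗ[ℂ] A)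
    (hD : ∀ x y, D (x * y) = D x * y + x * D y) (y : A) (hy : IsSelfAdjoint y)
    (s : ℂ) : ‖y‖ ≤ ‖y + s • D y‖ := by
  rcases subsingleton_or_nontrivial A with h | h
  · simp [Subsingleton.elim y 0]
  rcases CStarAlgebra.norm_or_neg_norm_mem_spectrum hy with h | h
  · exact aux_dissip1 D hD y hy h s
  · have := aux_dissip1 D hD (-y) hy.neg (by rw [norm_neg, ← spectrum.neg_eq]; simpa using h) s
    rw [map_neg, smul_neg, ← neg_add, norm_neg, norm_neg] at this
    exact this

theorem aux_closable {A : Type*} [CStarAlgebra A] (D : A →ₗ[ℂ] A)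
    (hD : ∀ x y, D (x * y) = D x * y + x * D y) (v : ℕ → A) (hv : ∀ n, IsSelfAdjoint (v n))
    (c : A) (hc : IsSelfAdjoint c) (h0 : Tendsto v atTop (𝓝 0))
    (h1 : Tendsto (fun n => D (v n)) atTop (𝓝 c)) : c = 0 := by
  have key : ∀ s : ℝ, 0 < s → ‖c‖ ≤ s * ‖D c‖ := by
    intro s hs
    have h : ∀ n, ‖v n - (s : ℂ) • c‖ ≤ ‖v n - (s : ℂ) • c + (s : ℂ) • (D (v n) - (s : ℂ) • D c)‖ := by
      intro n
      have := aux_dissip D hD (v n - (s : ℂ) • c)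
        ((hv n).sub (by rw [Complex.coe_smul]; exact (IsSelfAdjoint.all s).smul hc)) (s : ℂ)
      simpa using this
    have l1 : Tendsto (fun n => ‖v n - (s : ℂ) • c‖) atTop (𝓝 ‖0 - (s : ℂ) • c‖) :=
      (h0.sub_const _).norm
    have l2 : Tendsto (fun n => ‖v n - (s : ℂ) • c + (s : ℂ) • (D (v n) - (s : ℂ) • D c)‖) atTop
      (𝓝 ‖0 - (s : ℂ) • c + (s : ℂ) • (c - (s : ℂ) • D c)‖) :=
      ((h0.sub_const _).add ((h1.sub_const _).const_smul _)).norm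
    have := le_of_tendsto_of_tendsto' l1 l2 h
    have e : 0 - (s : ℂ) • c + (s : ℂ) • (c - (s : ℂ) • D c) = - ((s : ℂ) • (s : ℂ) • D c) := by
      rw [smul_sub]; abel
    rw [e, zero_sub, norm_neg, norm_neg, norm_smul, norm_smul, norm_smul] at this
    have hs' : ‖(s : ℂ)‖ = s := by simp [hs.le]
    rw [hs'] at this
    exact le_of_mul_le_mul_left this hs
  have : ‖c‖ ≤ 0 := by
    refine le_of_forall_pos_le_add fun ε hε => ?_
    have := key (ε / (‖D c‖ + 1)) (by positivity)
    have h2 : ε / (‖D c‖ + 1) * ‖D c‖ ≤ ε := by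
      rw [div_mul_eq_mul_div, div_le_iff₀ (by positivity)]; nlinarith [norm_nonneg (D c)]
    linarith
  simpa using this

theorem aux_cont {A : Type*} [CStarAlgebra A] (D : A →ₗ[ℂ] A)
    (hD : ∀ x y, D (x * y) = D x * y + x * D y) (hs : ∀ x, D (star x) = star (D x)) :
    Continuous D := by
  have re : ∀ (v : ℕ → A) (c : A), Tendsto v atTop (𝓝 0) →
      Tendsto (fun n => D (v n)) atTop (𝓝 c) → c + star c = 0 := by
    intro v c h0 h1
    refine aux_closable D hD (fun n => v n + star (v n)) (fun n => IsSelfAdjoint.add_star_self _) _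
      (IsSelfAdjoint.add_star_self c) ?_ ?_
    · simpa using h0.add h0.star
    · simp only [map_add, hs]
      exact h1.add h1.star
  apply LinearMap.continuous_of_seq_closed_graph
  intro u x y hu hy
  have h0 : Tendsto (fun n => u n - x) atTop (𝓝 0) := by simpa using hu.sub_const x
  have h1 : Tendsto (fun n => D (u n - x)) atTop (𝓝 (y - D x)) := by
    simp only [map_sub]; exact hy.sub_const _
  have e1 := re _ _ h0 h1
  have e2 := re (fun n => Complex.I • (u n - x)) (Complex.I • (y - D x))
    (by simpa using h0.const_smul Complex.I)
    (by simp only [map_smul]; exact h1.const_smul Complex.I)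
  rw [star_smul] at e2
  simp only [Complex.star_def, Complex.conj_I, neg_smul, ← sub_eq_add_neg, ← smul_sub] at e2
  have e3 := (smul_eq_zero.1 e2).resolve_left Complex.I_ne_zero
  have e4 : (2 : ℂ) • (y - D x) = 0 := by
    rw [two_smul, ← add_zero (0 : A)]
    nth_rewrite 1 [← e1]
    nth_rewrite 1 [← e3]
    abel
  exact sub_eq_zero.1 ((smul_eq_zero.1 e4).resolve_left two_ne_zero)

theorem aux_trace_bdd {A : Type*} [CStarAlgebra A] (τ : A →ₗ[ℂ] ℂ)
    (hτpos : ∀ a : A, 0 ≤ (τ (star a * a)).re ∧ (τ (star a * a)).im = 0) :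
    ∃ K : ℝ, ∀ x, ‖τ x‖ ≤ K * ‖x‖ := by
  have h1 : ∀ x : A, IsSelfAdjoint x → (τ x).im = 0 ∧ (τ x).re ≤ ‖x‖ * (τ 1).re := by
    intro x hx
    rcases subsingleton_or_nontrivial A with h | h
    · simp [Subsingleton.elim x 0]
    set k : A := cfc (fun t : ℝ => √(‖x‖ - t)) x with hk
    have hkk : star k * k = (‖x‖ : ℂ) • (1 : A) - x := by
      have hsa : IsSelfAdjoint k := cfc_predicate _ _
      rw [hsa.star_eq, hk, ← cfc_mul _ _ x]
      have : (spectrum ℝ x).EqOn (fun t : ℝ => √(‖x‖ - t) * √(‖x‖ - t)) (fun t => ‖x‖ - t) := by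
        intro t ht
        exact Real.mul_self_sqrt (sub_nonneg.2
          ((le_abs_self t).trans (by simpa using spectrum.norm_le_norm_of_mem ht)))
      rw [cfc_congr this, cfc_sub _ _ x, cfc_const _ x, cfc_id' ℝ x]
      congr 1
      rw [Algebra.algebraMap_eq_smul_one]
      exact (Complex.coe_smul ‖x‖ (1 : A)).symm
    have h := hτpos k
    have h1 := hτpos 1
    simp only [star_one, mul_one] at h1
    rw [hkk, map_sub, map_smul] at h
    simp [h1.2] at h
    exact ⟨h.2, h.1⟩
  set T := (τ 1).re
  have h2 : ∀ x : A, IsSelfAdjoint x → ‖τ x‖ ≤ ‖x‖ * T := by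
    intro x hx
    have a := h1 x hx
    have b := h1 (-x) hx.neg
    simp at b
    have : τ x = ((τ x).re : ℂ) := Complex.ext rfl (by simpa using a.1)
    rw [this, Complex.norm_real, Real.norm_eq_abs, abs_le]
    constructor <;> linarith [a.2, b.2]
  refine ⟨2 * T, fun x => ?_⟩
  have hT : 0 ≤ T := by simpa using (hτpos 1).1
  have e : x = (realPart x : A) + Complex.I • (imaginaryPart x : A) := (realPart_add_I_smul_imaginaryPart x).symm
  have r := h2 _ (realPart x).2
  have i := h2 _ (imaginaryPart x).2
  have r' : ‖(realPart x : A)‖ ≤ ‖x‖ := realPart.norm_le x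
  have i' : ‖(imaginaryPart x : A)‖ ≤ ‖x‖ := imaginaryPart.norm_le x
  calc ‖τ x‖ = ‖τ (realPart x : A) + Complex.I * τ (imaginaryPart x : A)‖ := by
        nth_rewrite 1 [e]; simp
    _ ≤ ‖τ (realPart x : A)‖ + ‖τ (imaginaryPart x : A)‖ := by
        refine (norm_add_le _ _).trans ?_
        simp
    _ ≤ ‖x‖ * T + ‖x‖ * T := by
        refine add_le_add (r.trans (by gcongr)) (i.trans (by gcongr))
    _ = _ := by ring

theorem aux_trace_der1 {A : Type*} [CStarAlgebra A] (τ : A →ₗ[ℂ] ℂ)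
    (hτpos : ∀ a : A, 0 ≤ (τ (star a * a)).re ∧ (τ (star a * a)).im = 0)
    (hτtr : ∀ a b : A, τ (a * b) = τ (b * a)) (D : A →ₗ[ℂ] A)
    (hD : ∀ x y, D (x * y) = D x * y + x * D y) (hs : ∀ x, D (star x) = star (D x)) (x : A) :
    τ (D x) = 0 := by
  obtain ⟨K, hK⟩ := aux_trace_bdd τ hτpos
  let D' : A →L[ℂ] A := ⟨D, aux_cont D hD hs⟩
  have hu : ∀ u ∈ unitary A, τ (D u) = 0 := by
    intro u hu
    rcases subsingleton_or_nontrivial A with h | h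
    · simp [Subsingleton.elim u 0]
    have h1 : ∀ n : ℕ, τ (D (u ^ (n + 1)) * star u ^ n) = (n + 1) * τ (D u) := by
      intro n
      induction n with
      | zero => simp
      | succ n ih =>
        have hun : star u ^ (n + 1) * u ^ (n + 1) = 1 := by
          rw [← star_pow]
          exact (Unitary.mem_iff.1 (pow_mem hu (n + 1))).1
        have huu : u * star u ^ (n + 1) = star u ^ n := by
          rw [pow_succ', ← mul_assoc, (Unitary.mem_iff.1 hu).2, one_mul]
        rw [pow_succ u (n + 1), hD, add_mul, map_add, mul_assoc, huu, ih, mul_assoc,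
          hτtr (u ^ (n + 1)), mul_assoc, hun, mul_one]
        push_cast; ring
    have h2 : ∀ n : ℕ, (n + 1) * ‖τ (D u)‖ ≤ |K| * ‖D'‖ := by
      intro n
      have a := hK (D (u ^ (n + 1)) * star u ^ n)
      rw [h1, norm_mul] at a
      have b : ‖D (u ^ (n + 1))‖ ≤ ‖D'‖ := by
        have := D'.le_opNorm (u ^ (n + 1))
        rwa [CStarRing.norm_of_mem_unitary (pow_mem hu _), mul_one] at this
      have c : ‖star u ^ n‖ = 1 :=
        CStarRing.norm_of_mem_unitary (pow_mem (Unitary.star_mem hu) _)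
      have d : ‖D (u ^ (n + 1)) * star u ^ n‖ ≤ ‖D'‖ := 
        (norm_mul_le _ _).trans (by rw [c, mul_one]; exact b)
      have e : ‖(n + 1 : ℂ)‖ = n + 1 := by
        rw [← Nat.cast_succ, Complex.norm_natCast]; push_cast; rfl
      rw [e] at a
      calc _ ≤ _ := a
        _ ≤ |K| * ‖D (u ^ (n + 1)) * star u ^ n‖ := by gcongr; exact le_abs_self K
        _ ≤ _ := by gcongr
    by_contra hne
    have hp : 0 < ‖τ (D u)‖ := norm_pos_iff.2 hne
    obtain ⟨n, hn⟩ := exists_nat_gt (|K| * ‖D'‖ / ‖τ (D u)‖)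
    rw [div_lt_iff₀ hp] at hn
    have := h2 n
    nlinarith
  have hx : x ∈ Submodule.span ℂ (unitary A : Set A) := by
    rw [CStarAlgebra.span_unitary]; trivial
  induction hx using Submodule.span_induction with
  | mem x h => exact hu x h
  | zero => simp
  | add x y _ _ h1 h2 => simp [h1, h2]
  | smul c x _ h => simp [h]

theorem aux_trace_der {A : Type*} [CStarAlgebra A] (τ : A →ₗ[ℂ] ℂ)
    (hτpos : ∀ a : A, 0 ≤ (τ (star a * a)).re ∧ (τ (star a * a)).im = 0)
    (hτtr : ∀ a b : A, τ (a * b) = τ (b * a)) (D : A → A) (hl : IsLinearMap ℂ D)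
    (hD : ∀ x y, D (x * y) = D x * y + x * D y) (x : A) :
    τ (D x) = 0 := by
  let D1 : A →ₗ[ℂ] A :=
    { toFun := fun x => D x + star (D (star x))
      map_add' := fun x y => by simp only [star_add, hl.map_add]; abel
      map_smul' := fun c x => by simp [hl.map_smul, star_smul] }
  let D2 : A →ₗ[ℂ] A :=
    { toFun := fun x => Complex.I • (D x - star (D (star x)))
      map_add' := fun x y => by simp only [star_add, hl.map_add, ← smul_add]; congr 1; abel
      map_smul' := fun c x => by simp [hl.map_smul, star_smul, smul_sub, smul_comm c] }
  have h1 := aux_trace_der1 τ hτpos hτtr D1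
    (fun x y => by
      change D (x * y) + star (D (star (x * y))) = (D x + star (D (star x))) * y + x * (D y + star (D (star y)))
      simp only [star_mul, hD, star_add, star_star]; noncomm_ring)
    (fun x => by
      change D (star x) + star (D (star (star x))) = star (D x + star (D (star x)))
      simp only [star_add, star_star]; abel) x
  have h2 := aux_trace_der1 τ hτpos hτtr D2
    (fun x y => by
      change Complex.I • (D (x * y) - star (D (star (x * y)))) = (Complex.I • (D x - star (D (star x)))) * y + x * (Complex.I • (D y - star (D (star y))))
      rw [smul_mul_assoc, mul_smul_comm, ← smul_add]; congr 1
      simp only [star_mul, hD, star_add, star_star]; noncomm_ring)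
    (fun x => by
      change Complex.I • (D (star x) - star (D (star (star x)))) = star (Complex.I • (D x - star (D (star x))))
      rw [star_smul, Complex.star_def, Complex.conj_I, neg_smul, ← smul_neg]; congr 1
      simp only [star_sub, star_star]; abel) x
  change τ (D x + star (D (star x))) = 0 at h1
  change τ (Complex.I • (D x - star (D (star x)))) = 0 at h2
  rw [map_smul, smul_eq_zero] at h2
  have h2 := h2.resolve_left Complex.I_ne_zero
  rw [map_add] at h1
  rw [map_sub] at h2
  linear_combination (h1 + h2) / 2

end

theorem stmt15 {A : Type*} [NormedRing A] [StarRing A] [CStarRing A]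
    [NormedAlgebra ℂ A] [CompleteSpace A] [StarModule ℂ A]
    -- `A` is simple: its only closed two-sided ideals are `{0}` and `A`
    (hsimple : ∀ I : TwoSidedIdeal A, IsClosed (I : Set A) → I = ⊥ ∨ I = ⊤)
    -- `τ` is a faithful tracial state on `A`
    (τ : A →ₗ[ℂ] ℂ) (hτ1 : τ 1 = 1) (hτpos : ∀ a : A, 0 ≤ τ (star a * a))
    (hτtr : ∀ a b : A, τ (a * b) = τ (b * a))
    (hτfaithful : ∀ a : A, τ (star a * a) = 0 → a = 0)
    (φ : A → A)
    -- operational 2-local derivation condition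
    (hφ : ∀ a b : A, ∃ D : A → A, IsLinearMap ℂ D ∧
      (∀ x y : A, D (x * y) = D x * y + x * D y) ∧
      φ a * b + a * φ b = D (a * b)) :
    IsLinearMap ℂ φ ∧ ∀ a b : A, φ (a * b) = φ a * b + a * φ b := by
  let _ : CStarAlgebra A := {}
  have hpos : ∀ a : A, 0 ≤ (τ (star a * a)).re ∧ (τ (star a * a)).im = 0 := by
    intro a
    have := Complex.le_def.1 (hτpos a)
    exact ⟨by simpa using this.1, by simpa using this.2.symm⟩
  have h0 : ∀ a b, τ (φ a * b) = - τ (a * φ b) := by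
    intro a b
    obtain ⟨D, hl, hD, h⟩ := hφ a b
    have := aux_trace_der τ hpos hτtr D hl hD (a * b)
    rw [← h, map_add] at this
    exact eq_neg_of_add_eq_zero_left this
  have hz : ∀ c : A, (∀ b, τ (c * b) = 0) → c = 0 := by
    intro c h
    apply hτfaithful
    rw [hτtr]; exact h _
  have hlin : IsLinearMap ℂ φ := by
    constructor
    · intro x y
      rw [← sub_eq_zero]
      apply hz
      intro b
      rw [sub_mul, add_mul, map_sub, map_add, h0, h0, h0, add_mul, map_add]; ring
    · intro c x
      rw [← sub_eq_zero]
      apply hz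
      intro b
      rw [sub_mul, smul_mul_assoc, map_sub, map_smul, h0, h0, smul_mul_assoc, map_smul]
      simp
  have hd1 : ∀ D : A → A, (∀ x y : A, D (x * y) = D x * y + x * D y) → D 1 = 0 := by
    intro D hD; simpa using hD 1 1
  have hφ1 : φ 1 = 0 := by
    obtain ⟨D, hl, hD, h⟩ := hφ 1 1
    rw [mul_one, mul_one, hd1 D hD, one_mul, ← two_smul ℂ] at h
    exact (smul_eq_zero.1 h).resolve_left two_ne_zero
  let Φ : A →ₗ[ℂ] A := hlin.mk' φ
  have hΦ : ∀ x, Φ x = φ x := fun _ => rfl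
  -- inverse identity
  have hinv : ∀ u v : A, u * v = 1 → v * u = 1 → Φ v = - (v * Φ u * v) := by
    intro u v h1 h2
    obtain ⟨D, hl, hD, h⟩ := hφ u v
    rw [h1, hd1 D hD] at h
    have : v * (φ u * v + u * φ v) = 0 := by rw [h, mul_zero]
    rw [mul_add, ← mul_assoc, ← mul_assoc, h2, one_mul] at this
    exact eq_neg_of_add_eq_zero_right this
  have hJ1 : ∀ a : A, ‖a‖ < 1 → Φ (a * a) = Φ a * a + a * Φ a := by
    intro a ha
    obtain ⟨p, hp⟩ := isUnit_one_sub_of_norm_lt_one ha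
    obtain ⟨q, hq⟩ := isUnit_one_sub_of_norm_lt_one (x := -a) (by rwa [norm_neg])
    rw [sub_neg_eq_add] at hq
    have hP1 : (1 - a) * (↑p⁻¹ : A) = 1 := by rw [← hp]; exact p.mul_inv
    have hP2 : (↑p⁻¹ : A) * (1 - a) = 1 := by rw [← hp]; exact p.inv_mul
    have hQ1 : (1 + a) * (↑q⁻¹ : A) = 1 := by rw [← hq]; exact q.mul_inv
    have hQ2 : (↑q⁻¹ : A) * (1 + a) = 1 := by rw [← hq]; exact q.inv_mul
    generalize (↑p⁻¹ : A) = P at *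
    generalize (↑q⁻¹ : A) = Q at *
    have hc : (1 - a) * (1 + a) = (1 + a) * (1 - a) := by noncomm_ring
    have hPQ : P * Q = Q * P := by
      calc P * Q = P * Q * ((1 - a) * (1 + a)) * (Q * P) := by
            rw [mul_assoc, mul_assoc (1 - a), ← mul_assoc (1 + a), hQ1, one_mul, hP1, mul_one]
        _ = P * (Q * (1 + a)) * (1 - a) * (Q * P) := by rw [hc]; noncomm_ring
        _ = _ := by rw [hQ2, mul_one, hP2, one_mul]
    have hsum : P + Q = (2 : ℂ) • (P * Q) := by
      calc P + Q = P * ((1 + a) * Q) + (P * (1 - a)) * Q := by rw [hQ1, hP2, mul_one, one_mul]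
        _ = P * ((1 + a) + (1 - a)) * Q := by noncomm_ring
        _ = _ := by
          have : (1 + a) + (1 - a) = (2 : ℂ) • (1 : A) := by rw [two_smul]; abel
          rw [this]; simp
    have e1 := hinv _ _ hP1 hP2
    have e2 := hinv _ _ hQ1 hQ2
    have hR : (1 - a * a) = (1 + a) * (1 - a) := by noncomm_ring
    have hR' : (1 - a * a) = (1 - a) * (1 + a) := by noncomm_ring
    have e3 := hinv (1 - a * a) (P * Q)
      (by rw [hR, mul_assoc, ← mul_assoc (1 - a), hP1, one_mul, hQ1])
      (by rw [hR, mul_assoc, ← mul_assoc Q, hQ2, one_mul, hP2])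
    have hΦ1 : Φ 1 = 0 := hφ1
    have e4 := congrArg Φ hsum
    rw [map_add, map_smul, e1, e2, e3, map_sub, map_sub, map_add, hΦ1, zero_sub, zero_add, zero_sub] at e4
    have e5 := congrArg (fun z => (1 + a) * (1 - a) * z * ((1 - a) * (1 + a))) e4
    have f1 : (1 + a) * (1 - a) * (-(P * -Φ a * P) + -(Q * Φ a * Q)) * ((1 - a) * (1 + a))
      = (1 + a) * Φ a * (1 + a) - (1 - a) * Φ a * (1 - a) := by
      calc _ = (1 + a) * ((1 - a) * P) * Φ a * (P * (1 - a)) * (1 + a)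
            - ((1 + a) * (1 - a)) * Q * Φ a * Q * ((1 - a) * (1 + a)) := by noncomm_ring
        _ = (1 + a) * ((1 - a) * P) * Φ a * (P * (1 - a)) * (1 + a)
            - (1 - a) * ((1 + a) * Q) * Φ a * (Q * (1 + a)) * (1 - a) := by
            rw [← hc]
            nth_rewrite 2 [hc]
            simp only [mul_assoc]
        _ = _ := by rw [hP1, hP2, hQ1, hQ2]; simp only [mul_one]
    have f2 : (1 + a) * (1 - a) * ((2 : ℂ) • -(P * Q * -Φ (a * a) * (P * Q))) * ((1 - a) * (1 + a))
      = (2 : ℂ) • Φ (a * a) := by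
      rw [mul_smul_comm, smul_mul_assoc]
      congr 1
      calc _ = (1 + a) * ((1 - a) * P) * Q * Φ (a * a) * (P * Q) * ((1 - a) * (1 + a)) := by noncomm_ring
        _ = (1 + a) * ((1 - a) * P) * Q * Φ (a * a) * (Q * (P * (1 - a)) * (1 + a)) := by
            rw [hPQ]; simp only [mul_assoc]
        _ = _ := by rw [hP1, hP2, mul_one, mul_one, hQ1, hQ2, one_mul, mul_one]
    rw [f1, f2] at e5
    have e6 : (2 : ℂ) • Φ (a * a) = (2 : ℂ) • (Φ a * a + a * Φ a) := by
      rw [← e5, two_smul]; noncomm_ring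
    exact smul_right_injective A (two_ne_zero (α := ℂ)) e6
  have hJ : ∀ a : A, Φ (a * a) = Φ a * a + a * Φ a := by
    intro a
    have hr : (0 : ℝ) < ‖a‖ + 1 := by positivity
    set r : ℂ := ((‖a‖ + 1 : ℝ) : ℂ)⁻¹ with hrdef
    have hr0 : r ≠ 0 := inv_ne_zero (by exact_mod_cast hr.ne')
    have hn : ‖r • a‖ < 1 := by
      rw [norm_smul, hrdef, norm_inv, Complex.norm_real, Real.norm_of_nonneg hr.le,
        inv_mul_lt_iff₀ hr]
      linarith
    have := hJ1 _ hn
    simp only [smul_mul_assoc, mul_smul_comm, map_smul, ← smul_add] at this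
    exact smul_right_injective A hr0 (smul_right_injective A hr0 this)
  have hss : ∀ z : A, (∀ y, z * y * z = 0) → z = 0 := by
    intro z h
    have h1 : star (star z * z) * (star z * z) = 0 := by
      rw [star_mul, star_star, mul_assoc, ← mul_assoc z, h, mul_zero]
    have h2 := CStarRing.star_mul_self_eq_zero_iff (star z * z) |>.1 h1
    exact CStarRing.star_mul_self_eq_zero_iff z |>.1 h2
  have hmain := aux_jordan_alg Φ hJ hss
  refine ⟨hlin, fun a b => ?_⟩
  set δ : A := Φ (a * b) - Φ a * b - a * Φ b with hδ
  suffices h : δ = 0 by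
    rw [hδ, sub_sub, sub_eq_zero] at h
    exact h
  let I : TwoSidedIdeal A := TwoSidedIdeal.mk' {z | ∀ x, δ * x * z = 0}
    (fun x => mul_zero _)
    (fun {x y} hx hy z => by rw [mul_add, hx, hy, add_zero])
    (fun {x} hx z => by rw [mul_neg, hx, neg_zero])
    (fun {x y} hy z => by rw [← mul_assoc, mul_assoc δ]; exact hy _)
    (fun {x y} hx z => by rw [← mul_assoc, hx, zero_mul])
  have hI : ∀ z, z ∈ I ↔ ∀ x, δ * x * z = 0 := fun z => by
    simp only [I, TwoSidedIdeal.mem_mk']; rfl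
  have hclosed : IsClosed (I : Set A) := by
    have : (I : Set A) = ⋂ x, {z | δ * x * z = 0} := by
      ext z; simp [hI]
    rw [this]
    exact isClosed_iInter fun x => isClosed_eq (continuous_const.mul continuous_id) continuous_const
  rcases hsimple I hclosed with h | h
  · have hcomm : ∀ c d : A, c * d = d * c := by
      intro c d
      have : c * d - d * c ∈ I := (hI _).2 fun x => hmain a b x c d
      rw [h, TwoSidedIdeal.mem_bot] at this
      exact sub_eq_zero.1 this
    have h3 := hJ (a + b)
    rw [mul_add, add_mul, add_mul, map_add, map_add, map_add, map_add, hJ a, hJ b, hcomm b a] at h3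
    have : (2 : ℂ) • δ = 0 := by
      rw [two_smul, hδ]
      have h4 := sub_eq_zero.2 h3
      rw [← h4]
      rw [mul_add, add_mul, add_mul, add_mul, mul_add, mul_add,  hcomm (Φ b) a, hcomm b (Φ a)]
      abel
    exact (smul_eq_zero.1 this).resolve_left two_ne_zero
  · have : (1 : A) ∈ I := by rw [h]; trivial
    simpa using (hI 1).1 this 1
end

section
/- Let A be a unital C*-algebra with a faithful tracial state τ, and let φ : A → A be a (not necessarily linear, additive or continuous) map such that for any a, b ∈ A there exists s ∈ A with φ(a)b + aφ(b) = s(ab) − (ab)s. Then φ is complex-linear, i.e., φ(t₁a₁ + t₂a₂) = t₁φ(a₁) + t₂φ(a₂) for all t₁, t₂ ∈ ℂ and a₁, a₂ ∈ A. -/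
set_option synthInstance.maxHeartbeats 1000000
set_option maxHeartbeats 1000000

open scoped ComplexOrder

theorem stmt17 {A : Type*} [NormedRing A] [StarRing A] [CStarRing A]
    [NormedAlgebra ℂ A] [CompleteSpace A] [StarModule ℂ A]
    -- `τ` is a faithful tracial state on `A`
    (τ : A →ₗ[ℂ] ℂ) (hτ1 : τ 1 = 1) (hτpos : ∀ a : A, 0 ≤ τ (star a * a))
    (hτtr : ∀ a b : A, τ (a * b) = τ (b * a))
    (hτfaithful : ∀ a : A, τ (star a * a) = 0 → a = 0)
    (φ : A → A)
    -- operational 2-local inner derivation condition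
    (hφ : ∀ a b : A, ∃ s : A, φ a * b + a * φ b = s * (a * b) - (a * b) * s) :
    ∀ (t₁ t₂ : ℂ) (a₁ a₂ : A), φ (t₁ • a₁ + t₂ • a₂) = t₁ • φ a₁ + t₂ • φ a₂ := by
  have key : ∀ a b : A, τ (φ a * b) = - τ (a * φ b) := by
    intro a b
    obtain ⟨s, hs⟩ := hφ a b
    have h := congrArg τ hs
    rw [map_add, map_sub, hτtr s (a * b), sub_self] at h
    exact eq_neg_of_add_eq_zero_left h
  intro t₁ t₂ a₁ a₂
  rw [← sub_eq_zero]
  have h0 : ∀ b : A, τ ((φ (t₁ • a₁ + t₂ • a₂) - (t₁ • φ a₁ + t₂ • φ a₂)) * b) = 0 := by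
    intro b
    rw [sub_mul, add_mul, smul_mul_assoc, smul_mul_assoc, map_sub, map_add, map_smul, map_smul,
      key, key, key, add_mul, smul_mul_assoc, smul_mul_assoc, map_add, map_smul, map_smul]
    simp only [smul_eq_mul]
    ring
  apply hτfaithful
  rw [hτtr]
  exact h0 _
end
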